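/- arXiv:1908.00845 — 2 statements merged into one kernel-verified Lean document; each statement's English description precedes it below -/
import Mathlib

section
/- Under the stated assumptions, if the Lyapunov exponent χ is negative, then for every x ∈ E the almost sure limit f_{−∞}^t := lim_{k→∞} f_{t−k}^t(x) exists and does not depend on x; setting X_t := f_{−∞}^t, the process (X_t)_{t∈ℤ} is stationary and ergodic, satisfies X_t = F(X_{t−1}, Z_{t−1}, ε_t) for all t ∈ ℤ, and is the unique stationary process satisfying this recursion. -/
open MeasureTheory Filter Topology ProbabilityTheory
open scoped ENNReal NNReal

noncomputable section

/-- Shift on the two-sided path space. -/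
def pathShift {α : Type*} (x : ℤ → α) : ℤ → α := fun t => x (t + 1)

/-- Extended Lipschitz constant `c(g)` of a map `g`. -/
def lipConst {E : Type*} [PseudoEMetricSpace E] (g : E → E) : ℝ≥0∞ :=
  ⨆ (x : E) (y : E), edist (g x) (g y) / edist x y

/-- Backward iterations: `iterBack f s t = f_{t-s}^t = f_t ∘ ⋯ ∘ f_{t-s}`. -/
def iterBack {Ω E : Type*} (f : ℤ → Ω → E → E) : ℕ → ℤ → Ω → E → E
  | 0, t, ω, x => f t ω x
  | (s + 1), t, ω, x => f t ω (iterBack f s (t - 1) ω x)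

/-- `log⁺`. -/
def logPlus (x : ℝ) : ℝ := max (Real.log x) 0

/-- positive part of `log` on `ℝ≥0∞`. -/
def logPosE (x : ℝ≥0∞) : ℝ≥0∞ := if x = ⊤ then ⊤ else ENNReal.ofReal (Real.log x.toReal)

/-- negative part of `log` on `ℝ≥0∞`. -/
def logNegE (x : ℝ≥0∞) : ℝ≥0∞ := if x = 0 then ⊤ else ENNReal.ofReal (-(Real.log x.toReal))

/-- The expectation `E[log W]`, with values in `EReal`. -/
def eLogExp {Ω : Type*} [MeasurableSpace Ω] (P : Measure Ω) (W : Ω → ℝ≥0∞) : EReal :=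
  ((∫⁻ ω, logPosE (W ω) ∂P : ℝ≥0∞) : EReal) - ((∫⁻ ω, logNegE (W ω) ∂P : ℝ≥0∞) : EReal)

/-!
The logarithms of the Lipschitz constants of the backward iterates form a subadditive process over
the shift of the noise. A negative Lyapunov exponent makes one of these logarithms, truncated from
below to be integrable, have negative mean; averaging subadditivity over all starting points and
the maximal ergodic theorem then give exponential contraction of the backward iterates. Since
`log⁺ d(x₀, f₀(x₀))` is integrable, the displacements along the orbit of the noise grow
subexponentially, so the backward iterates are Cauchy. Their limit is a fixed measurable function of
the translated noise, hence a stationary and ergodic process. Finally, another stationary solution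
`Y` satisfies `Y_t = f_{t-n}^t(Y_{t-n-1})`; if it differed from the limit, contraction would force
`Y_{t-n-1}` to infinity, which stationarity forbids.
-/

section Birkhoff

variable {W : Type*} [MeasurableSpace W] {μ : Measure W} {S : W → W} {φ : W → ℝ}

lemma partialSups_birkhoffSum_succ {W : Type*} (S : W → W) (φ : W → ℝ) (n : ℕ) (w : W) :
    partialSups (birkhoffSum S φ · w) (n + 1) =
      max 0 (φ w + partialSups (birkhoffSum S φ · (S w)) n) := by
  induction n with
  | zero =>
    rw [← Order.succ_eq_add_one, partialSups_succ, Order.succ_eq_add_one, birkhoffSum_succ']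
    simp
  | succ n ih =>
    rw [← Order.succ_eq_add_one (n + 1), partialSups_succ, Order.succ_eq_add_one, ih,
      ← Order.succ_eq_add_one n, partialSups_succ, Order.succ_eq_add_one, birkhoffSum_succ',
      max_assoc, max_add_add_left]

lemma integrable_birkhoffSum (hS : MeasurePreserving S μ μ) (hφ : Integrable φ μ) (n : ℕ) :
    Integrable (birkhoffSum S φ n) μ :=
  integrable_finsetSum _ fun i _ => (hS.iterate i).integrable_comp_of_integrable hφ

lemma integrable_partialSups {u : ℕ → W → ℝ} (hu : ∀ n, Integrable (u n) μ) (n : ℕ) :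
    Integrable (fun w => partialSups (u · w) n) μ := by
  induction n with
  | zero => simpa using hu 0
  | succ n ih =>
    simp only [← Order.succ_eq_add_one, partialSups_succ]
    exact ih.sup (hu _)

lemma integral_nonneg_of_ae_not_bddAbove_birkhoffSum (hS : MeasurePreserving S μ μ)
    (hφ : Integrable φ μ)
    (hunbdd : ∀ᵐ w ∂μ, ¬ BddAbove (Set.range (birkhoffSum S φ · w))) :
    0 ≤ ∫ w, φ w ∂μ := by
  set M : ℕ → W → ℝ := fun n w => partialSups (birkhoffSum S φ · w) n
  have hM_succ (n w) : M (n + 1) w = max 0 (φ w + M n (S w)) :=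
    partialSups_birkhoffSum_succ S φ n w
  have hM_mono (w) : Monotone (M · w) := (partialSups (birkhoffSum S φ · w)).monotone
  have hM_nonneg (n w) : 0 ≤ M n w := (hM_mono w n.zero_le).trans' (by simp [M])
  have hM (n) : Integrable (M n) μ := integrable_partialSups (integrable_birkhoffSum hS hφ) n
  have hMS (n) : Integrable (M n ∘ S) μ := hS.integrable_comp_of_integrable (hM n)
  have hlim : Tendsto (fun n => ∫ w, (M (n + 1) w - M n (S w)) ∂μ) atTop (𝓝 (∫ w, φ w ∂μ)) := by
    refine tendsto_integral_of_dominated_convergence (fun w => |φ w|)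
      (fun n => ((hM (n + 1)).sub (hMS n)).aestronglyMeasurable) hφ.abs
      (fun n => .of_forall fun w => ?_) ?_
    · have hsub : M (n + 1) w - M n (S w) = max (-M n (S w)) (φ w) := by
        rw [hM_succ, ← max_sub_sub_right]; ring_nf
      rw [hsub, Real.norm_eq_abs, abs_le]
      exact ⟨(neg_abs_le _).trans (le_max_right _ _),
        max_le ((neg_nonpos.2 (hM_nonneg n _)).trans (abs_nonneg _)) (le_abs_self _)⟩
    · filter_upwards [hS.quasiMeasurePreserving.ae hunbdd] with w hw
      obtain ⟨_, ⟨n₀, rfl⟩, hn₀⟩ := not_bddAbove_iff.1 hw (-φ w)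
      refine tendsto_const_nhds.congr' ?_
      filter_upwards [eventually_ge_atTop n₀] with n hn
      have : birkhoffSum S φ n₀ (S w) ≤ M n (S w) :=
        le_partialSups_of_le (birkhoffSum S φ · (S w)) hn
      rw [hM_succ, max_eq_right (by linarith)]
      ring
  refine ge_of_tendsto' hlim fun n => ?_
  calc (0 : ℝ) ≤ ∫ w, (M (n + 1) w - M n w) ∂μ :=
        integral_nonneg fun w => sub_nonneg.2 (hM_mono w n.le_succ)
    _ = ∫ w, M (n + 1) w ∂μ - ∫ w, M n (S w) ∂μ := by
        rw [integral_sub (hM _) (hM _), ← integral_map hS.aemeasurable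
          (hS.map_eq.symm ▸ (hM n).aestronglyMeasurable), hS.map_eq]
    _ = ∫ w, (M (n + 1) w - M n (S w)) ∂μ := (integral_sub (hM _) (hMS n)).symm

lemma preimage_setOf_bddAbove_birkhoffSum {W : Type*} (S : W → W) (φ : W → ℝ) :
    S ⁻¹' {w | BddAbove (Set.range (birkhoffSum S φ · w))} =
      {w | BddAbove (Set.range (birkhoffSum S φ · w))} := by
  ext w
  simp only [Set.mem_preimage, Set.mem_ofPred_eq, bddAbove_def, Set.forall_mem_range]
  constructor
  · rintro ⟨C, hC⟩
    refine ⟨max 0 (φ w + C), fun n => ?_⟩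
    cases n with
    | zero => simp
    | succ n =>
      rw [birkhoffSum_succ']
      exact le_max_of_le_right (by linarith [hC n])
  · rintro ⟨C, hC⟩
    refine ⟨C - φ w, fun n => ?_⟩
    linarith [hC (n + 1), birkhoffSum_succ' S φ n w]

lemma ae_bddAbove_birkhoffSum (hS : Ergodic S μ) (hφ : Integrable φ μ)
    (hneg : ∫ w, φ w ∂μ < 0) :
    ∀ᵐ w ∂μ, BddAbove (Set.range (birkhoffSum S φ · w)) := by
  wlog hφm : Measurable φ generalizing φ
  · obtain ⟨ψ, hψm, hφψ⟩ := hφ.aestronglyMeasurable.aemeasurable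
    have hψ := this (hφ.congr hφψ) (integral_congr_ae hφψ ▸ hneg) hψm
    filter_upwards [hψ, ae_all_iff.2 fun n =>
      hS.quasiMeasurePreserving.birkhoffSum_ae_eq_of_ae_eq hφψ n] with w hw heq
    simpa only [heq] using hw
  have hmeas : MeasurableSet {w | BddAbove (Set.range (birkhoffSum S φ · w))} :=
    measurableSet_bddAbove_range fun n =>
      Finset.measurable_sum _ fun i _ => hφm.comp (hS.measurable.iterate i)
  refine (hS.ae_mem_or_ae_notMem hmeas
    (preimage_setOf_bddAbove_birkhoffSum S φ)).resolve_right fun hunbdd => ?_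
  exact hneg.not_ge
    (integral_nonneg_of_ae_not_bddAbove_birkhoffSum hS.toMeasurePreserving hφ hunbdd)

lemma ae_eventually_birkhoffSum_le [IsProbabilityMeasure μ] (hS : Ergodic S μ)
    (hφ : Integrable φ μ) {m : ℝ} (hm : ∫ w, φ w ∂μ < m) :
    ∀ᵐ w ∂μ, ∀ᶠ n : ℕ in atTop, birkhoffSum S φ n w ≤ n * m := by
  obtain ⟨m', hm', hm'm⟩ := exists_between hm
  have hbdd := ae_bddAbove_birkhoffSum hS (hφ.sub (integrable_const m')) (by
    rw [integral_sub' hφ (integrable_const m')]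
    simpa using hm')
  filter_upwards [hbdd] with w ⟨C, hC⟩
  filter_upwards [(tendsto_natCast_atTop_atTop.atTop_mul_const
    (sub_pos.2 hm'm)).eventually_ge_atTop C] with n hn
  have hCn : birkhoffSum S φ n w - n * m' ≤ C := by
    simpa [birkhoffSum] using hC ⟨n, rfl⟩
  linarith

lemma ae_eventually_iterate_le_mul [IsProbabilityMeasure μ] (hS : MeasurePreserving S μ μ)
    (hφ : Integrable φ μ) {δ : ℝ} (hδ : 0 < δ) :
    ∀ᵐ w ∂μ, ∀ᶠ n : ℕ in atTop, φ (S^[n] w) ≤ δ * n := by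
  let _ : MeasureSpace W := ⟨μ⟩
  have hsum := tsum_prob_mem_Ioi_lt_top (X := fun w => |φ w / δ|) (hφ.div_const δ).abs
    fun w => abs_nonneg _
  have hpre (n : ℕ) : μ (S^[n] ⁻¹' {w | |φ w / δ| ∈ Set.Ioi (n : ℝ)}) =
      μ {w | |φ w / δ| ∈ Set.Ioi (n : ℝ)} :=
    (hS.iterate n).measure_preimage
      ((hφ.div_const δ).abs.aestronglyMeasurable.aemeasurable.nullMeasurable measurableSet_Ioi)
  filter_upwards [ae_eventually_notMem ((tsum_congr hpre).trans_lt hsum).ne] with w hw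
  filter_upwards [hw] with n hn
  have hle : φ (S^[n] w) / δ ≤ n := (le_abs_self _).trans (not_lt.1 hn)
  rwa [div_le_iff₀' hδ] at hle

end Birkhoff

section Subadditive

variable {W : Type*} [MeasurableSpace W] {μ : Measure W} {S : W → W} {a : ℕ → W → ℝ}

lemma sum_range_add_le_birkhoffSum {W : Type*} {S : W → W} {a : ℕ → W → ℝ} {w : W}
    (hsub : ∀ k m, a (k + m) w ≤ a k w + a m (S^[k] w)) (n N : ℕ) :
    ∑ j ∈ Finset.range n, a (N + j) w ≤
      ∑ j ∈ Finset.range n, a j w + birkhoffSum S (a n) N w := by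
  induction N with
  | zero => simp
  | succ N ih =>
    have hshift : ∑ j ∈ Finset.range n, a (N + 1 + j) w + a N w =
        ∑ j ∈ Finset.range n, a (N + j) w + a (N + n) w := by
      rw [← Finset.sum_range_succ (fun j => a (N + j) w), Finset.sum_range_succ']
      simp only [add_zero, add_assoc, add_comm 1]
    rw [birkhoffSum_succ]
    linarith [hsub N n]

-- Decompose `N + n = (N + j) + (n - j)` for every `j < n` and sum over `j`: averaging over the
-- starting points replaces ergodicity of `S^[n]`, which may fail.
lemma mul_le_of_subadditive {W : Type*} {S : W → W} {a : ℕ → W → ℝ} {w : W}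
    (hsub : ∀ k m, a (k + m) w ≤ a k w + a m (S^[k] w)) (n N : ℕ) :
    n * a (N + n) w ≤ ∑ j ∈ Finset.range n, a j w + birkhoffSum S (a n) N w +
      ∑ j ∈ Finset.range n, a (n - j) (S^[j] (S^[N] w)) := by
  calc n * a (N + n) w = ∑ _j ∈ Finset.range n, a (N + n) w := by simp
    _ ≤ ∑ j ∈ Finset.range n, (a (N + j) w + a (n - j) (S^[j] (S^[N] w))) := by
        refine Finset.sum_le_sum fun j hj => ?_
        have := hsub (N + j) (n - j)
        rwa [add_assoc, Nat.add_sub_cancel' (Finset.mem_range.1 hj).le, add_comm N j,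
          Function.iterate_add_apply, add_comm j N] at this
    _ ≤ _ := by
        rw [Finset.sum_add_distrib]
        gcongr
        exact sum_range_add_le_birkhoffSum hsub n N

theorem exists_ae_eventually_le_neg_mul_of_subadditive [IsProbabilityMeasure μ] (hS : Ergodic S μ)
    (ha : ∀ n, Integrable (a n) μ)
    (hsub : ∀ᵐ w ∂μ, ∀ k m, a (k + m) w ≤ a k w + a m (S^[k] w))
    {n : ℕ} (hn : n ≠ 0) (hneg : ∫ w, a n w ∂μ < 0) :
    ∃ δ > 0, ∀ᵐ w ∂μ, ∀ᶠ N : ℕ in atTop, a N w ≤ -(δ * N) := by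
  obtain ⟨m, hm, hm0⟩ := exists_between hneg
  set overshoot : W → ℝ := fun w => ∑ j ∈ Finset.range n, a (n - j) (S^[j] w)
  have hovershoot : Integrable overshoot μ := integrable_finsetSum _ fun j _ =>
    (hS.toMeasurePreserving.iterate j).integrable_comp_of_integrable (ha _)
  have hn0 : (0 : ℝ) < n := by positivity
  refine ⟨-m / 4 / n, by have := neg_pos.2 hm0; positivity, ?_⟩
  filter_upwards [hsub, ae_eventually_birkhoffSum_le hS (ha n) hm,
    ae_eventually_iterate_le_mul hS.toMeasurePreserving hovershoot (half_pos (neg_pos.2 hm0))]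
    with w hw hbirkhoff horbit
  set A := ∑ j ∈ Finset.range n, a j w
  have hlarge : ∀ᶠ N : ℕ in atTop, A + -m / 4 * n ≤ N * (-m / 4) :=
    (tendsto_natCast_atTop_atTop.atTop_mul_const (by linarith)).eventually_ge_atTop _
  suffices h : ∀ᶠ N : ℕ in atTop, a (N + n) w ≤ -(-m / 4 / n * ↑(N + n)) by
    rwa [← map_add_atTop_eq_nat n, eventually_map]
  filter_upwards [hbirkhoff, horbit, hlarge] with N hN₁ hN₂ hN₃
  have hmul : n * a (N + n) w ≤ A + birkhoffSum S (a n) N w + overshoot (S^[N] w) :=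
    mul_le_of_subadditive hw n N
  have hrhs : -(-m / 4 / n * ((N + n : ℕ) : ℝ)) = (m / 4 * (N + n)) / n := by
    push_cast; ring
  rw [hrhs, le_div_iff₀' hn0]
  linarith

end Subadditive

section TruncatedLogarithm

/-- The logarithm truncated from below, `max (log c) (-L)`. The truncation is applied to the
argument, because `Real.log 0 = 0`. -/
def truncLog (L : ℝ) (c : ℝ≥0∞) : ℝ :=
  Real.log (max c.toReal (Real.exp (-L)))

variable {L M : ℝ} {a b c : ℝ≥0∞}

lemma neg_le_truncLog (L : ℝ) (c : ℝ≥0∞) : -L ≤ truncLog L c := by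
  rw [truncLog, Real.le_log_iff_exp_le (lt_max_of_lt_right (Real.exp_pos _))]
  exact le_max_right _ _

lemma le_ofReal_exp_truncLog (L : ℝ) (hc : c ≠ ⊤) :
    c ≤ ENNReal.ofReal (Real.exp (truncLog L c)) := by
  rw [truncLog, Real.exp_log (lt_max_of_lt_right (Real.exp_pos _)), ENNReal.le_ofReal_iff_toReal_le
    hc (le_max_of_le_right (Real.exp_pos _).le)]
  exact le_max_left _ _

lemma truncLog_le_logPlus (hL : 0 ≤ L) (c : ℝ≥0∞) : truncLog L c ≤ logPlus c.toReal := by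
  rcases le_total c.toReal (Real.exp (-L)) with h | h
  · rw [truncLog, max_eq_right h, Real.log_exp]
    exact (neg_nonpos.2 hL).trans (le_max_right _ _)
  · rw [truncLog, max_eq_left h]
    exact le_max_left _ _

lemma truncLog_add_le (ha : a ≠ ⊤) (hb : b ≠ ⊤) (h : c ≤ a * b) :
    truncLog (L + M) c ≤ truncLog L a + truncLog M b := by
  have hmul : c.toReal ≤ a.toReal * b.toReal :=
    (ENNReal.toReal_mono (ENNReal.mul_ne_top ha hb) h).trans_eq ENNReal.toReal_mul
  have hpos (x y : ℝ) : 0 < max x (Real.exp y) := lt_max_of_lt_right (Real.exp_pos y)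
  rw [truncLog, truncLog, truncLog, ← Real.log_mul (hpos _ _).ne' (hpos _ _).ne', neg_add,
    Real.exp_add]
  refine Real.log_le_log (lt_max_of_lt_right (by positivity)) (max_le (hmul.trans ?_) ?_)
  · exact mul_le_mul (le_max_left _ _) (le_max_left _ _) ENNReal.toReal_nonneg (hpos _ _).le
  · exact mul_le_mul (le_max_right _ _) (le_max_right _ _) (Real.exp_pos _).le (hpos _ _).le

lemma truncLog_eq_max (hc₀ : c ≠ 0) (hc : c ≠ ⊤) :
    truncLog L c = max (Real.log c.toReal) (-L) := by
  rw [truncLog, Real.strictMonoOn_log.monotoneOn.map_max (ENNReal.toReal_pos hc₀ hc)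
    (Real.exp_pos _), Real.log_exp]

lemma ofReal_truncLog (hL : 0 ≤ L) (hc : c ≠ ⊤) : ENNReal.ofReal (truncLog L c) = logPosE c := by
  rcases eq_or_ne c 0 with rfl | hc₀
  · simp [truncLog, logPosE, hL, (Real.exp_pos _).le]
  · rw [truncLog_eq_max hc₀ hc, ENNReal.ofReal_max, ENNReal.ofReal_of_nonpos (neg_nonpos.2 hL),
      max_eq_left zero_le, logPosE, if_neg hc]

lemma ofReal_neg_truncLog (hc : c ≠ ⊤) :
    ENNReal.ofReal (-truncLog L c) = min (logNegE c) (ENNReal.ofReal L) := by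
  rcases eq_or_ne c 0 with rfl | hc₀
  · simp [truncLog, logNegE, (Real.exp_pos _).le]
  · rw [truncLog_eq_max hc₀ hc, ← min_neg_neg, neg_neg, ENNReal.ofReal_min, logNegE, if_neg hc₀]

lemma measurable_truncLog (L : ℝ) : Measurable (truncLog L) :=
  Real.measurable_log.comp (ENNReal.measurable_toReal.max measurable_const)

lemma measurable_logPosE : Measurable logPosE :=
  Measurable.ite (measurableSet_singleton ⊤) measurable_const
    (Real.measurable_log.comp ENNReal.measurable_toReal).ennreal_ofReal

lemma measurable_logNegE : Measurable logNegE :=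
  Measurable.ite (measurableSet_singleton 0) measurable_const
    (Real.measurable_log.comp ENNReal.measurable_toReal).neg.ennreal_ofReal

lemma logPlus_mul_le (x y : ℝ) : logPlus (x * y) ≤ logPlus x + logPlus y := by
  simpa only [logPlus, Real.posLog_apply, max_comm] using Real.posLog_mul (x := x) (y := y)

lemma logPlus_nonneg (x : ℝ) : 0 ≤ logPlus x := le_max_right _ _

lemma logPlus_le_logPlus {x y : ℝ} (hx : 0 ≤ x) (hxy : x ≤ y) : logPlus x ≤ logPlus y := by
  simpa only [logPlus, Real.posLog_apply, max_comm] using Real.posLog_le_posLog hx hxy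

lemma measurable_logPlus : Measurable logPlus := Real.measurable_log.max measurable_const

lemma le_exp_logPlus (x : ℝ) : x ≤ Real.exp (logPlus x) := by
  rcases le_or_gt x 0 with hx | hx
  · exact hx.trans (Real.exp_pos _).le
  · rw [← Real.log_le_iff_le_exp hx]
    exact le_max_left _ _

lemma ae_eventually_iterate_le_exp {W : Type*} [MeasurableSpace W] {μ : Measure W}
    [IsProbabilityMeasure μ] {S : W → W} (hS : MeasurePreserving S μ μ) {φ : W → ℝ}
    (hφ : Integrable (fun w => logPlus (φ w)) μ) {δ : ℝ} (hδ : 0 < δ) :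
    ∀ᵐ w ∂μ, ∀ᶠ n : ℕ in atTop, φ (S^[n] w) ≤ Real.exp (δ * n) := by
  filter_upwards [ae_eventually_iterate_le_mul hS hφ hδ] with w hw
  filter_upwards [hw] with n hn
  exact (le_exp_logPlus _).trans (Real.exp_le_exp.2 hn)

lemma exists_neg_of_iInf_inv_mul_neg {a : ℕ → EReal}
    (h : ⨅ n : {n : ℕ // 1 ≤ n}, (((n.1 : ℝ)⁻¹ : ℝ) : EReal) * a n.1 < 0) :
    ∃ n, 1 ≤ n ∧ a n < 0 := by
  obtain ⟨⟨n, hn⟩, hneg⟩ := iInf_lt_iff.1 h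
  refine ⟨n, hn, not_le.1 fun hnonneg => hneg.not_ge (mul_nonneg ?_ hnonneg)⟩
  exact EReal.coe_nonneg.2 (by positivity)

variable {Ω : Type*} [MeasurableSpace Ω] {P : Measure Ω} {V W : Ω → ℝ≥0∞}

lemma integrable_truncLog [IsFiniteMeasure P] (hL : 0 ≤ L) (hW : AEMeasurable W P)
    (hint : Integrable (fun ω => logPlus (W ω).toReal) P) :
    Integrable (fun ω => truncLog L (W ω)) P := by
  refine ((integrable_const L).add hint).mono'
    ((measurable_truncLog L).comp_aemeasurable hW).aestronglyMeasurable (.of_forall fun ω => ?_)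
  have hlow := neg_le_truncLog L (W ω)
  have hup := truncLog_le_logPlus hL (W ω)
  have hnonneg := logPlus_nonneg (W ω).toReal
  exact abs_le.2 ⟨by dsimp; linarith, by dsimp; linarith⟩

lemma eLogExp_congr_ae (h : V =ᵐ[P] W) : eLogExp P V = eLogExp P W := by
  have hpos : ∫⁻ ω, logPosE (V ω) ∂P = ∫⁻ ω, logPosE (W ω) ∂P :=
    lintegral_congr_ae (h.fun_comp logPosE)
  have hneg : ∫⁻ ω, logNegE (V ω) ∂P = ∫⁻ ω, logNegE (W ω) ∂P :=
    lintegral_congr_ae (h.fun_comp logNegE)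
  rw [eLogExp, eLogExp, hpos, hneg]

lemma eLogExp_comp_of_measurePreserving {Ω' : Type*} [MeasurableSpace Ω'] {Q : Measure Ω'}
    {π : Ω → Ω'} (hπ : MeasurePreserving π P Q) {W : Ω' → ℝ≥0∞} (hW : Measurable W) :
    eLogExp P (fun ω => W (π ω)) = eLogExp Q W := by
  have hpos : ∫⁻ ω, logPosE (W (π ω)) ∂P = ∫⁻ w, logPosE (W w) ∂Q :=
    hπ.lintegral_comp (measurable_logPosE.comp hW)
  have hneg : ∫⁻ ω, logNegE (W (π ω)) ∂P = ∫⁻ w, logNegE (W w) ∂Q :=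
    hπ.lintegral_comp (measurable_logNegE.comp hW)
  rw [eLogExp, eLogExp, hpos, hneg]

lemma eLogExp_neg_iff (hpos : ∫⁻ ω, logPosE (W ω) ∂P ≠ ⊤) :
    eLogExp P W < 0 ↔ ∫⁻ ω, logPosE (W ω) ∂P < ∫⁻ ω, logNegE (W ω) ∂P :=
  (EReal.sub_neg (.inl (by simpa using hpos)) (.inl (by simp))).trans
    EReal.coe_ennreal_lt_coe_ennreal_iff

lemma exists_integral_truncLog_neg [IsFiniteMeasure P] (hW : AEMeasurable W P)
    (hfin : ∀ᵐ ω ∂P, W ω ≠ ⊤) (hint : Integrable (fun ω => logPlus (W ω).toReal) P)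
    (h : eLogExp P W < 0) :
    ∃ L : ℕ, ∫ ω, truncLog L (W ω) ∂P < 0 := by
  have hint' (L : ℕ) := integrable_truncLog L.cast_nonneg hW hint
  have hpos (L : ℕ) : ∫⁻ ω, ENNReal.ofReal (truncLog L (W ω)) ∂P = ∫⁻ ω, logPosE (W ω) ∂P :=
    lintegral_congr_ae (hfin.mono fun ω hω => ofReal_truncLog L.cast_nonneg hω)
  have hneg (L : ℕ) : ∫⁻ ω, ENNReal.ofReal (-truncLog L (W ω)) ∂P =
      ∫⁻ ω, min (logNegE (W ω)) L ∂P :=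
    lintegral_congr_ae (hfin.mono fun ω hω => (ofReal_neg_truncLog hω).trans (by
      rw [ENNReal.ofReal_natCast]))
  have hsup : ∫⁻ ω, logNegE (W ω) ∂P = ⨆ L : ℕ, ∫⁻ ω, min (logNegE (W ω)) L ∂P := by
    rw [← lintegral_iSup' (f := fun (L : ℕ) ω => min (logNegE (W ω)) L) fun L =>
      (measurable_logNegE.comp_aemeasurable hW).min aemeasurable_const]
    · refine lintegral_congr fun ω => ?_
      rw [← inf_iSup_eq, ENNReal.iSup_natCast, inf_top_eq]
    · exact .of_forall fun ω L L' hL => by dsimp; gcongr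
  rw [eLogExp_neg_iff (hpos 0 ▸ (hint' 0).lintegral_lt_top.ne), hsup, lt_iSup_iff] at h
  obtain ⟨L, hL⟩ := h
  refine ⟨L, ?_⟩
  rw [integral_eq_lintegral_pos_part_sub_lintegral_neg_part (hint' L), sub_neg]
  refine ENNReal.toReal_strict_mono (hint' L).neg.lintegral_lt_top.ne ?_
  rwa [hpos, hneg]

end TruncatedLogarithm

section Submultiplicative

variable {W : Type*} [MeasurableSpace W] {μ : Measure W} {S : W → W} {c : ℕ → W → ℝ≥0∞}

lemma integrable_logPlus_of_submultiplicative (hS : MeasurePreserving S μ μ)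
    (hc : ∀ n, AEMeasurable (c n) μ) (hfin : ∀ᵐ w ∂μ, ∀ n, c n w ≠ ⊤) (hzero : ∀ w, c 0 w ≤ 1)
    (hsub : ∀ᵐ w ∂μ, ∀ k m, c (k + m) w ≤ c k w * c m (S^[k] w))
    (hint : Integrable (fun w => logPlus (c 1 w).toReal) μ) (n : ℕ) :
    Integrable (fun w => logPlus (c n w).toReal) μ := by
  have hmeas (n) : AEStronglyMeasurable (fun w => logPlus (c n w).toReal) μ :=
    (measurable_logPlus.comp_aemeasurable (hc n).ennreal_toReal).aestronglyMeasurable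
  induction n with
  | zero =>
    refine (integrable_zero W ℝ μ).congr (.of_forall fun w => (max_eq_right ?_).symm)
    exact Real.log_nonpos ENNReal.toReal_nonneg (ENNReal.toReal_le_of_le_ofReal one_pos.le
      (by simpa using hzero w))
  | succ n ih =>
    refine (ih.add ((hS.iterate n).integrable_comp_of_integrable hint)).mono' (hmeas _) ?_
    filter_upwards [hfin, hsub, (hS.iterate n).quasiMeasurePreserving.ae hfin]
      with w hw hwsub hwn
    rw [Real.norm_of_nonneg (logPlus_nonneg _)]
    refine (logPlus_le_logPlus ENNReal.toReal_nonneg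
      (ENNReal.toReal_mono (ENNReal.mul_ne_top (hw n) (hwn 1)) (hwsub n 1))).trans ?_
    rw [ENNReal.toReal_mul]
    exact logPlus_mul_le _ _

theorem exists_ae_eventually_le_exp_of_submultiplicative [IsProbabilityMeasure μ]
    (hS : Ergodic S μ) (hc : ∀ n, AEMeasurable (c n) μ) (hfin : ∀ᵐ w ∂μ, ∀ n, c n w ≠ ⊤)
    (hzero : ∀ w, c 0 w ≤ 1) (hsub : ∀ᵐ w ∂μ, ∀ k m, c (k + m) w ≤ c k w * c m (S^[k] w))
    (hint : Integrable (fun w => logPlus (c 1 w).toReal) μ)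
    {n : ℕ} (hn : n ≠ 0) (hneg : eLogExp μ (c n) < 0) :
    ∃ δ > 0, ∀ᵐ w ∂μ, ∀ᶠ N : ℕ in atTop, c N w ≤ ENNReal.ofReal (Real.exp (-(δ * N))) := by
  have hint' :=
    integrable_logPlus_of_submultiplicative hS.toMeasurePreserving hc hfin hzero hsub hint
  obtain ⟨L, hL⟩ := exists_integral_truncLog_neg (hc n) (hfin.mono fun w hw => hw n) (hint' n) hneg
  set a : ℕ → W → ℝ := fun k w => truncLog (k * (L / n)) (c k w)
  have ha (k) : Integrable (a k) μ := integrable_truncLog (by positivity) (hc k) (hint' k)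
  have hasub : ∀ᵐ w ∂μ, ∀ k m, a (k + m) w ≤ a k w + a m (S^[k] w) := by
    filter_upwards [hsub, hfin, ae_all_iff.2 fun k =>
      (hS.toMeasurePreserving.iterate k).quasiMeasurePreserving.ae hfin] with w hw hwfin hwS k m
    simp only [a, Nat.cast_add, add_mul]
    exact truncLog_add_le (hwfin k) (hwS k m) (hw k m)
  have haneg : ∫ w, a n w ∂μ < 0 := by
    simpa only [a, mul_div_cancel₀ (L : ℝ) (Nat.cast_ne_zero.2 hn)] using hL
  obtain ⟨δ, hδ, hdecay⟩ := exists_ae_eventually_le_neg_mul_of_subadditive hS ha hasub hn haneg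
  refine ⟨δ, hδ, ?_⟩
  filter_upwards [hdecay, hfin] with w hw hwfin
  filter_upwards [hw] with N hN
  exact (le_ofReal_exp_truncLog _ (hwfin N)).trans (by gcongr)

end Submultiplicative

section LipschitzConstant

variable {E : Type*}

section EMetric

variable [PseudoEMetricSpace E]

lemma lipConst_le {g : E → E} {L : ℝ≥0∞} (h : ∀ x y, edist (g x) (g y) ≤ L * edist x y) :
    lipConst g ≤ L :=
  iSup₂_le fun x y => ENNReal.div_le_of_le_mul (h x y)

/-- The Lipschitz constant of `g` along a family `u` of points. For countable `u` it depends
measurably on a random map `g`, which `lipConst` need not do; for dense `u` and continuous `g` it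
agrees with `lipConst g`. -/
def lipConstAlong {ι : Type*} (u : ι → E) (g : E → E) : ℝ≥0∞ :=
  ⨆ (i : ι) (j : ι), edist (g (u i)) (g (u j)) / edist (u i) (u j)

lemma lipConstAlong_le_lipConst {ι : Type*} (u : ι → E) (g : E → E) :
    lipConstAlong u g ≤ lipConst g :=
  iSup₂_le fun i j =>
    le_iSup₂ (f := fun x y => edist (g x) (g y) / edist x y) (u i) (u j)

lemma lipConstAlong_id_le_one {ι : Type*} (u : ι → E) : lipConstAlong u id ≤ 1 :=
  (lipConstAlong_le_lipConst u id).trans (lipConst_le fun x y => by simp)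

end EMetric

variable [MetricSpace E] {g : E → E}

lemma edist_le_lipConstAlong_mul {ι : Type*} (u : ι → E) (g : E → E) (i j : ι) :
    edist (g (u i)) (g (u j)) ≤ lipConstAlong u g * edist (u i) (u j) := by
  rcases eq_or_ne (u i) (u j) with hij | hij
  · simp [hij]
  · rw [← ENNReal.div_le_iff (edist_pos.2 hij).ne' (edist_ne_top _ _)]
    exact le_iSup₂ (f := fun i j => edist (g (u i)) (g (u j)) / edist (u i) (u j)) i j

lemma edist_le_lipConst_mul (g : E → E) (x y : E) :
    edist (g x) (g y) ≤ lipConst g * edist x y :=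
  edist_le_lipConstAlong_mul id g x y

lemma lipschitzWith_lipConst (hg : lipConst g ≠ ⊤) : LipschitzWith (lipConst g).toNNReal g :=
  fun x y => by simpa only [ENNReal.coe_toNNReal hg] using edist_le_lipConst_mul g x y

lemma dist_le_of_lipConst_le {C : ℝ} (hC : 0 ≤ C) (hg : lipConst g ≤ ENNReal.ofReal C) (x y : E) :
    dist (g x) (g y) ≤ C * dist x y := by
  have h := (edist_le_lipConst_mul g x y).trans (mul_le_mul_left hg _)
  rwa [edist_dist, edist_dist, ← ENNReal.ofReal_mul hC, ENNReal.ofReal_le_ofReal_iff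
    (by positivity)] at h

lemma lipConst_comp_le (g h : E → E) : lipConst (g ∘ h) ≤ lipConst g * lipConst h := by
  refine lipConst_le fun x y => (edist_le_lipConst_mul g _ _).trans ?_
  rw [mul_assoc]
  gcongr
  exact edist_le_lipConst_mul h x y

lemma lipConstAlong_eq_lipConst {ι : Type*} {u : ι → E} (hu : DenseRange u) (hg : Continuous g) :
    lipConstAlong u g = lipConst g := by
  refine (lipConstAlong_le_lipConst u g).antisymm ?_
  rcases eq_or_ne (lipConstAlong u g) ⊤ with htop | htop
  · simp [htop]
  refine lipConst_le (hu.induction_on₂ (isClosed_le ?_ ?_) (edist_le_lipConstAlong_mul u g))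
  · exact (hg.comp continuous_fst).edist (hg.comp continuous_snd)
  · exact (ENNReal.continuous_const_mul htop).comp continuous_edist

lemma measurable_lipConstAlong {W ι : Type*} [MeasurableSpace W] [Countable ι]
    [SecondCountableTopology E] [MeasurableSpace E] [OpensMeasurableSpace E]
    {G : W → E → E} (hG : ∀ x, Measurable (G · x)) (u : ι → E) :
    Measurable fun w => lipConstAlong u (G w) :=
  .iSup fun i => .iSup fun j => ((hG (u i)).edist (hG (u j))).div_const _

end LipschitzConstant

section BackwardIterate

/-- The backward iterate `g w ∘ g (θ w) ∘ ⋯ ∘ g (θ^[n-1] w)` of a random map `g` over a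
transformation `θ`; in the notation of `iterBack` it has `n`, not `n + 1`, factors. -/
def backwardIterate {W E : Type*} (θ : W → W) (g : W → E → E) : ℕ → W → E → E
  | 0, _ => id
  | n + 1, w => g w ∘ backwardIterate θ g n (θ w)

variable {W E : Type*} {θ : W → W} {g : W → E → E} {w : W}

lemma backwardIterate_one (θ : W → W) (g : W → E → E) (w : W) :
    backwardIterate θ g 1 w = g w := rfl

lemma backwardIterate_add (θ : W → W) (g : W → E → E) (k m : ℕ) (w : W) :
    backwardIterate θ g (k + m) w =
      backwardIterate θ g k w ∘ backwardIterate θ g m (θ^[k] w) := by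
  induction k generalizing w with
  | zero => simp [backwardIterate]
  | succ k ih =>
    rw [Nat.add_right_comm, backwardIterate, backwardIterate, ih, Function.comp_assoc,
      Function.iterate_succ_apply]

lemma iterBack_eq_backwardIterate {Ω : Type*} {f : ℤ → Ω → E → E} {π : ℤ → Ω → W}
    (hf : ∀ t ω, f t ω = g (π t ω)) (hπ : ∀ t ω, θ (π t ω) = π (t - 1) ω) (k : ℕ) (t : ℤ) (ω : Ω) :
    iterBack f k t ω = backwardIterate θ g (k + 1) (π t ω) := by
  induction k generalizing t with
  | zero => exact hf t ω
  | succ k ih =>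
    rw [backwardIterate, hπ, ← ih, ← hf]
    rfl

lemma measurable_backwardIterate [MeasurableSpace W] [MeasurableSpace E] (hθ : Measurable θ)
    (hg : Measurable g.uncurry) (n : ℕ) (x : E) :
    Measurable fun w => backwardIterate θ g n w x := by
  induction n with
  | zero => exact measurable_const
  | succ n ih => exact hg.comp (measurable_id.prodMk (ih.comp hθ))

variable [MetricSpace E]

lemma lipConst_backwardIterate_ne_top (hg : ∀ n, lipConst (g (θ^[n] w)) ≠ ⊤) (n : ℕ) :
    lipConst (backwardIterate θ g n w) ≠ ⊤ := by
  induction n generalizing w with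
  | zero => exact ((lipConst_le fun x y => by simp [backwardIterate]).trans_lt
      ENNReal.one_lt_top).ne
  | succ n ih =>
    refine ((lipConst_comp_le _ _).trans_lt (ENNReal.mul_lt_top (hg 0).lt_top ?_)).ne
    exact (ih fun k => hg (k + 1)).lt_top

lemma lipConst_backwardIterate_add_le (θ : W → W) (g : W → E → E) (k m : ℕ) (w : W) :
    lipConst (backwardIterate θ g (k + m) w) ≤
      lipConst (backwardIterate θ g k w) * lipConst (backwardIterate θ g m (θ^[k] w)) := by
  rw [backwardIterate_add]
  exact lipConst_comp_le _ _

/-- Along the orbit of `w`, the backward iterates of `g` contract at the exponential rate `δ`. -/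
def BackwardContracting (θ : W → W) (g : W → E → E) (δ : ℝ) (w : W) : Prop :=
  ∀ᶠ n : ℕ in atTop, lipConst (backwardIterate θ g n w) ≤ ENNReal.ofReal (Real.exp (-(δ * n)))

lemma BackwardContracting.eventually_dist_le {δ : ℝ} (h : BackwardContracting θ g δ w) :
    ∀ᶠ n : ℕ in atTop, ∀ x y, dist (backwardIterate θ g n w x) (backwardIterate θ g n w y) ≤
      Real.exp (-(δ * n)) * dist x y :=
  h.mono fun _ hn => dist_le_of_lipConst_le (Real.exp_pos _).le hn

lemma tendsto_exp_neg_mul_natCast {δ : ℝ} (hδ : 0 < δ) :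
    Tendsto (fun n : ℕ => Real.exp (-(δ * n))) atTop (𝓝 0) :=
  Real.tendsto_exp_neg_atTop_nhds_zero.comp (tendsto_natCast_atTop_atTop.const_mul_atTop hδ)

lemma BackwardContracting.cauchySeq {δ : ℝ} (hδ : 0 < δ) (h : BackwardContracting θ g δ w) {x₀ : E}
    (hdisp : ∀ᶠ n : ℕ in atTop, dist x₀ (g (θ^[n] w) x₀) ≤ Real.exp (δ / 2 * n)) :
    CauchySeq fun n => backwardIterate θ g n w x₀ := by
  have hsum : Summable fun n : ℕ => Real.exp (n * -(δ / 2)) :=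
    Real.summable_exp_nat_mul_iff.2 (by linarith)
  refine cauchySeq_of_summable_dist (hsum.of_norm_bounded_eventually_nat ?_)
  filter_upwards [h.eventually_dist_le, hdisp] with n hn hn'
  rw [Real.norm_of_nonneg dist_nonneg, Nat.succ_eq_add_one, backwardIterate_add,
    backwardIterate_one]
  calc _ ≤ Real.exp (-(δ * n)) * dist x₀ (g (θ^[n] w) x₀) := hn _ _
    _ ≤ Real.exp (-(δ * n)) * Real.exp (δ / 2 * n) := by gcongr
    _ = Real.exp (n * -(δ / 2)) := by rw [← Real.exp_add]; ring_nf

lemma BackwardContracting.tendsto_of_tendsto {δ : ℝ} (hδ : 0 < δ) (h : BackwardContracting θ g δ w)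
    {x y z : E} (hx : Tendsto (fun n => backwardIterate θ g n w x) atTop (𝓝 z)) :
    Tendsto (fun n => backwardIterate θ g n w y) atTop (𝓝 z) := by
  refine hx.congr_dist (squeeze_zero' (.of_forall fun _ => dist_nonneg)
    (h.eventually_dist_le.mono fun n hn => hn x y) ?_)
  simpa using (tendsto_exp_neg_mul_natCast hδ).mul_const (dist x y)

lemma BackwardContracting.tendsto_dist_atTop {δ : ℝ} (hδ : 0 < δ)
    (h : BackwardContracting θ g δ w) {x y₀ z : E} {y : ℕ → E}
    (hy : ∀ n, backwardIterate θ g n w (y n) = y₀)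
    (hx : Tendsto (fun n => backwardIterate θ g n w x) atTop (𝓝 z)) (hne : y₀ ≠ z) :
    Tendsto (fun n => dist (y n) x) atTop atTop := by
  have hexp : Tendsto (fun n : ℕ => Real.exp (δ * n)) atTop atTop :=
    Real.tendsto_exp_atTop.comp (tendsto_natCast_atTop_atTop.const_mul_atTop hδ)
  refine tendsto_atTop_mono' _ ?_
    (hexp.atTop_mul_pos (dist_pos.2 hne) (tendsto_const_nhds.dist hx))
  filter_upwards [h.eventually_dist_le] with n hn
  have hdist := hn (y n) x
  rwa [hy, Real.exp_neg, ← div_eq_inv_mul, le_div_iff₀' (Real.exp_pos _)] at hdist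

/-- The limit of the backward iterates started at `x₀`, a junk value where they diverge. -/
def backwardLimit (θ : W → W) (g : W → E → E) (x₀ : E) (w : W) : E :=
  have : Nonempty E := ⟨x₀⟩
  limUnder atTop fun n => backwardIterate θ g n w x₀

lemma tendsto_backwardLimit_of_cauchySeq [CompleteSpace E] {x₀ : E}
    (h : CauchySeq fun n => backwardIterate θ g n w x₀) :
    Tendsto (fun n => backwardIterate θ g n w x₀) atTop (𝓝 (backwardLimit θ g x₀ w)) :=
  have : Nonempty E := ⟨x₀⟩
  tendsto_nhds_limUnder (cauchySeq_tendsto_of_complete h)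

lemma measurable_backwardLimit [MeasurableSpace W] [CompleteSpace E] [SecondCountableTopology E]
    [MeasurableSpace E] [BorelSpace E] (hθ : Measurable θ) (hg : Measurable g.uncurry) (x₀ : E) :
    Measurable (backwardLimit θ g x₀) :=
  have : Nonempty E := ⟨x₀⟩
  (StronglyMeasurable.limUnder fun n =>
    (measurable_backwardIterate hθ hg n x₀).stronglyMeasurable).measurable

lemma eq_apply_of_tendsto_backwardIterate {x z z' : E} (hg : Continuous (g w))
    (hz : Tendsto (fun n => backwardIterate θ g n w x) atTop (𝓝 z))
    (hz' : Tendsto (fun n => backwardIterate θ g n (θ w) x) atTop (𝓝 z')) :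
    z = g w z' :=
  tendsto_nhds_unique ((tendsto_add_atTop_iff_nat 1).2 hz) ((hg.tendsto z').comp hz')

end BackwardIterate

section PathTranslation

variable {α : Type*}

/-- Translation of two-sided paths by `t`; `pathTranslate 1` is `pathShift`. -/
def pathTranslate (t : ℤ) (w : ℤ → α) : ℤ → α := fun s => w (s + t)

lemma pathTranslate_zero : pathTranslate 0 = (id : (ℤ → α) → ℤ → α) :=
  funext₂ fun w s => congrArg w (add_zero s)

lemma pathTranslate_comp (s t : ℤ) :
    pathTranslate s ∘ pathTranslate t = (pathTranslate (s + t) : (ℤ → α) → ℤ → α) :=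
  funext₂ fun w u => congrArg w (add_assoc u s t)

lemma pathTranslate_pathTranslate (s t : ℤ) (w : ℤ → α) :
    pathTranslate s (pathTranslate t w) = pathTranslate (s + t) w :=
  congrFun (pathTranslate_comp s t) w

lemma pathTranslate_neg_one_pathTranslate (t : ℤ) (w : ℤ → α) :
    pathTranslate (-1) (pathTranslate t w) = pathTranslate (t - 1) w := by
  rw [pathTranslate_pathTranslate, neg_add_eq_sub]

variable [MeasurableSpace α] {μ : Measure (ℤ → α)}

lemma measurable_pathTranslate (t : ℤ) : Measurable (pathTranslate (α := α) t) :=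
  measurable_pi_lambda _ fun s => measurable_pi_apply (s + t)

/-- The shift of two-sided paths as a measurable automorphism, with inverse `pathTranslate (-1)`. -/
def pathShiftEquiv (α : Type*) [MeasurableSpace α] : (ℤ → α) ≃ᵐ (ℤ → α) where
  toFun := pathShift
  invFun := pathTranslate (-1)
  left_inv w := (pathTranslate_pathTranslate (-1) 1 w).trans (congrFun pathTranslate_zero w)
  right_inv w := (pathTranslate_pathTranslate 1 (-1) w).trans (congrFun pathTranslate_zero w)
  measurable_toFun := measurable_pathTranslate 1
  measurable_invFun := measurable_pathTranslate (-1)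

lemma ergodic_pathTranslate_neg_one (h : Ergodic pathShift μ) : Ergodic (pathTranslate (-1)) μ :=
  Ergodic.symm (e := pathShiftEquiv α) h

lemma measurePreserving_pathTranslate (h : MeasurePreserving pathShift μ μ) (t : ℤ) :
    MeasurePreserving (pathTranslate t) μ μ := by
  have hinv : MeasurePreserving (pathTranslate (-1)) μ μ :=
    MeasurePreserving.symm (pathShiftEquiv α) h
  induction t using Int.induction_on with
  | zero => exact pathTranslate_zero (α := α) ▸ MeasurePreserving.id μ
  | succ t ih => exact pathTranslate_comp (α := α) t 1 ▸ ih.comp h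
  | pred t ih => exact pathTranslate_comp (α := α) (-t) (-1) ▸ ih.comp hinv

variable {Ω : Type*} [MeasurableSpace Ω] {P : Measure Ω}

lemma ergodic_pathShift_map_factor {β : Type*} [MeasurableSpace β] {ξ : Ω → ℤ → α}
    (hξ : Measurable ξ) (h : Ergodic pathShift (P.map ξ)) {G : (ℤ → α) → β} (hG : Measurable G) :
    Ergodic pathShift (P.map fun ω t => G (pathTranslate t (ξ ω))) := by
  have hfactor : Measurable fun w (t : ℤ) => G (pathTranslate t w) :=
    measurable_pi_lambda _ fun t => hG.comp (measurable_pathTranslate t)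
  have hmap : P.map (fun ω t => G (pathTranslate t (ξ ω))) =
      (P.map ξ).map fun w t => G (pathTranslate t w) := (Measure.map_map hfactor hξ).symm
  rw [hmap]
  refine (hfactor.measurePreserving _).ergodic_of_ergodic_semiconj h (measurable_pathTranslate 1)
    fun w => funext fun t => ?_
  exact congrArg G (pathTranslate_pathTranslate t 1 w)

lemma identDistrib_of_measurePreserving_pathShift {Y : ℤ → Ω → α} (hY : ∀ t, Measurable (Y t))
    (hstat : MeasurePreserving pathShift (P.map fun ω t => Y t ω) (P.map fun ω t => Y t ω))
    (s t : ℤ) : IdentDistrib (Y s) (Y t) P P := by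
  have hpath : Measurable fun ω t => Y t ω := measurable_pi_lambda _ hY
  have hlaw (u : ℤ) : P.map (Y u) = (P.map fun ω t => Y t ω).map fun y => y 0 := by
    rw [← (measurePreserving_pathTranslate hstat u).map_eq,
      Measure.map_map (measurable_pathTranslate u) hpath,
      Measure.map_map (measurable_pi_apply 0) ((measurable_pathTranslate u).comp hpath)]
    simp [Function.comp_def, pathTranslate]
  exact ⟨(hY s).aemeasurable, (hY t).aemeasurable, (hlaw s).trans (hlaw t).symm⟩

end PathTranslation

section Tightness

variable {Ω : Type*} [MeasurableSpace Ω] {P : Measure Ω} [IsFiniteMeasure P]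

lemma tendsto_measure_lt_natCast {V : Ω → ℝ} (hV : AEMeasurable V P) :
    Tendsto (fun M : ℕ => P {ω | (M : ℝ) < V ω}) atTop (𝓝 0) := by
  have hempty : ⋂ M : ℕ, {ω | (M : ℝ) < V ω} = ∅ :=
    Set.iInter_eq_empty_iff.2 fun ω => (exists_nat_ge (V ω)).imp fun M hM => hM.not_gt
  rw [← measure_empty (μ := P), ← hempty]
  refine tendsto_measure_iInter_atTop (fun M => nullMeasurableSet_lt aemeasurable_const hV)
    (fun M N hMN ω (hω : (N : ℝ) < V ω) => ?_) ⟨0, measure_ne_top _ _⟩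
  exact (Nat.cast_le.2 hMN).trans_lt hω

lemma ae_not_tendsto_atTop_of_identDistrib {V : ℕ → Ω → ℝ}
    (hV : ∀ n, IdentDistrib (V n) (V 0) P P) :
    ∀ᵐ ω ∂P, ¬ Tendsto (V · ω) atTop atTop := by
  have htail (M : ℕ) : P {ω | Tendsto (V · ω) atTop atTop} ≤ P {ω | (M : ℝ) < V 0 ω} := by
    have hmono : Monotone fun n : ℕ => {ω | ∀ k ≥ n, (M : ℝ) < V k ω} :=
      fun n n' hn ω hω k hk => hω k (hn.trans hk)
    calc P {ω | Tendsto (V · ω) atTop atTop} ≤ P (⋃ n : ℕ, {ω | ∀ k ≥ n, (M : ℝ) < V k ω}) :=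
          measure_mono fun ω hω =>
            Set.mem_iUnion.2 (eventually_atTop.1 (hω.eventually_gt_atTop (M : ℝ)))
      _ = ⨆ n : ℕ, P {ω | ∀ k ≥ n, (M : ℝ) < V k ω} := hmono.measure_iUnion
      _ ≤ P {ω | (M : ℝ) < V 0 ω} := iSup_le fun n =>
          (measure_mono fun ω (hω : ∀ k ≥ n, (M : ℝ) < V k ω) => hω n le_rfl).trans_eq
            ((hV n).measure_mem_eq measurableSet_Ioi)
  rw [ae_iff]
  simpa only [not_not] using
    nonpos_iff_eq_zero.1 (ge_of_tendsto' (tendsto_measure_lt_natCast (hV 0).aemeasurable_fst) htail)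

end Tightness

section StationaryRecursion

variable {Ω W E : Type*} {θ : W → W} {g : W → E → E} {π : ℤ → Ω → W}

lemma iterate_past (hshift : ∀ t ω, θ (π t ω) = π (t - 1) ω) (n : ℕ) (t : ℤ) (ω : Ω) :
    θ^[n] (π t ω) = π (t - n) ω := by
  induction n with
  | zero => simp
  | succ n ih => rw [Function.iterate_succ_apply', ih, hshift, Nat.cast_succ, sub_sub]

lemma backwardIterate_past_eq {ω : Ω} (hshift : ∀ t ω, θ (π t ω) = π (t - 1) ω) {y : ℤ → E}
    (hy : ∀ t, y t = g (π t ω) (y (t - 1))) (n : ℕ) (t : ℤ) :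
    backwardIterate θ g n (π t ω) (y (t - n)) = y t := by
  induction n generalizing t with
  | zero => simp [backwardIterate]
  | succ n ih =>
    rw [backwardIterate, hshift, Function.comp_apply, Nat.cast_succ, add_comm, ← sub_sub, ih, ← hy]

variable [MeasurableSpace Ω] {P : Measure Ω} [MetricSpace E]

lemma ae_lipConst_past_ne_top (hshift : ∀ t ω, θ (π t ω) = π (t - 1) ω)
    (hLip : ∀ t, ∀ᵐ ω ∂P, lipConst (g (π t ω)) ≠ ⊤) :
    ∀ᵐ ω ∂P, ∀ t n, lipConst (g (θ^[n] (π t ω))) ≠ ⊤ := by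
  filter_upwards [ae_all_iff.2 hLip] with ω hω t n
  simpa only [iterate_past hshift] using hω _

lemma ae_eq_apply_of_ae_tendsto_backwardIterate (hshift : ∀ t ω, θ (π t ω) = π (t - 1) ω)
    {X : ℤ → Ω → E} {x : E}
    (hlim : ∀ t, ∀ᵐ ω ∂P, Tendsto (fun n => backwardIterate θ g n (π t ω) x) atTop (𝓝 (X t ω)))
    {t : ℤ} (hLip : ∀ᵐ ω ∂P, lipConst (g (π t ω)) ≠ ⊤) :
    ∀ᵐ ω ∂P, X t ω = g (π t ω) (X (t - 1) ω) := by
  filter_upwards [hLip, hlim t, hlim (t - 1)] with ω hω hz hz'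
  exact eq_apply_of_tendsto_backwardIterate (lipschitzWith_lipConst hω).continuous hz
    (hshift t ω ▸ hz')

lemma ae_eq_of_stationary_of_recursion [MeasurableSpace E] [OpensMeasurableSpace E]
    [IsFiniteMeasure P] {δ : ℝ} (hδ : 0 < δ) (hshift : ∀ t ω, θ (π t ω) = π (t - 1) ω)
    {Y : ℤ → Ω → E} (hY : ∀ t, Measurable (Y t))
    (hstat : MeasurePreserving pathShift (P.map fun ω t => Y t ω) (P.map fun ω t => Y t ω))
    (hrec : ∀ t, ∀ᵐ ω ∂P, Y t ω = g (π t ω) (Y (t - 1) ω)) {t : ℤ}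
    (hcontr : ∀ᵐ ω ∂P, BackwardContracting θ g δ (π t ω)) {x : E} {X : Ω → E}
    (hlim : ∀ᵐ ω ∂P, Tendsto (fun n => backwardIterate θ g n (π t ω) x) atTop (𝓝 (X ω))) :
    Y t =ᵐ[P] X := by
  have hdist (n : ℕ) : IdentDistrib (fun ω => dist (Y (t - n) ω) x)
      (fun ω => dist (Y (t - (0 : ℕ)) ω) x) P P :=
    (identDistrib_of_measurePreserving_pathShift hY hstat _ _).comp
      (continuous_id.dist continuous_const).measurable
  filter_upwards [ae_all_iff.2 hrec, hcontr, hlim, ae_not_tendsto_atTop_of_identDistrib hdist]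
    with ω hrecω hcontrω hlimω htight
  by_contra hne
  exact htight (hcontrω.tendsto_dist_atTop hδ
    (fun n => backwardIterate_past_eq (y := (Y · ω)) hshift hrecω n t) hlimω hne)

variable [SecondCountableTopology E] [MeasurableSpace E] [BorelSpace E]
  [MeasurableSpace W] {Q : Measure W}

lemma ae_of_ae_comp_measurePreserving {ψ : Ω → W} (hψ : MeasurePreserving ψ P Q) {p : W → Prop}
    (hp : MeasurableSet {w | p w}) (h : ∀ᵐ ω ∂P, p (ψ ω)) : ∀ᵐ w ∂Q, p w :=
  hψ.map_eq ▸ (ae_map_iff hψ.aemeasurable hp).2 h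

lemma exists_measurable_eq_lipConst_backwardIterate (hθ : Measurable θ)
    (hg : Measurable g.uncurry) :
    ∃ c : ℕ → W → ℝ≥0∞, (∀ k, Measurable (c k)) ∧ (∀ w, c 0 w ≤ 1) ∧
      ∀ w, (∀ n, lipConst (g (θ^[n] w)) ≠ ⊤) → ∀ k, c k w = lipConst (backwardIterate θ g k w) := by
  obtain ⟨D, hDcount, hD⟩ := TopologicalSpace.exists_countable_dense E
  have := hDcount.to_subtype
  refine ⟨fun k w => lipConstAlong ((↑) : D → E) (backwardIterate θ g k w),
    fun k => measurable_lipConstAlong (measurable_backwardIterate hθ hg k) _,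
    fun _ => lipConstAlong_id_le_one _, fun w hw k => ?_⟩
  exact lipConstAlong_eq_lipConst hD.denseRange_val
    (lipschitzWith_lipConst (lipConst_backwardIterate_ne_top hw k)).continuous

variable [IsProbabilityMeasure Q]

theorem exists_ae_backwardContracting (hθ : Ergodic θ Q) (hg : Measurable g.uncurry)
    (hπ : ∀ t, MeasurePreserving (π t) P Q) (hshift : ∀ t ω, θ (π t ω) = π (t - 1) ω)
    (hLip : ∀ t, ∀ᵐ ω ∂P, lipConst (g (π t ω)) ≠ ⊤)
    (hint : Integrable (fun ω => logPlus (lipConst (g (π 0 ω))).toReal) P)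
    {n : ℕ} (hn : n ≠ 0) {s : ℤ}
    (hneg : eLogExp P (fun ω => lipConst (backwardIterate θ g n (π s ω))) < 0) :
    ∃ δ > 0, ∀ t, ∀ᵐ ω ∂P, BackwardContracting θ g δ (π t ω) := by
  obtain ⟨c, hc, hc_zero, hc_eq⟩ :=
    exists_measurable_eq_lipConst_backwardIterate hθ.measurable hg
  have hfinP := ae_lipConst_past_ne_top hshift hLip
  have hc_eqP : ∀ᵐ ω ∂P, ∀ t k, c k (π t ω) = lipConst (backwardIterate θ g k (π t ω)) :=
    hfinP.mono fun ω hω t => hc_eq _ (hω t)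
  have hfin : ∀ᵐ w ∂Q, ∀ k, c k w ≠ ⊤ := by
    refine ae_all_iff.2 fun k => ae_of_ae_comp_measurePreserving (hπ 0)
      (hc k (measurableSet_singleton ⊤).compl) ?_
    filter_upwards [hfinP, hc_eqP] with ω hω heq
    exact (heq 0 k).trans_ne (lipConst_backwardIterate_ne_top (hω 0) k)
  have hsub : ∀ᵐ w ∂Q, ∀ k m, c (k + m) w ≤ c k w * c m (θ^[k] w) := by
    refine ae_all_iff.2 fun k => ae_all_iff.2 fun m => ae_of_ae_comp_measurePreserving (hπ 0)
      (measurableSet_le (hc _) ((hc k).mul ((hc m).comp (hθ.measurable.iterate k)))) ?_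
    filter_upwards [hc_eqP] with ω hω
    simpa only [iterate_past hshift, hω] using lipConst_backwardIterate_add_le θ g k m (π 0 ω)
  have hintQ : Integrable (fun w => logPlus (c 1 w).toReal) Q := by
    refine ((hπ 0).integrable_comp
      (measurable_logPlus.comp (hc 1).ennreal_toReal).aestronglyMeasurable).1 (hint.congr ?_)
    exact hc_eqP.mono fun ω hω => by simp [hω, backwardIterate_one]
  have hnegQ : eLogExp Q (c n) < 0 := by
    rwa [← eLogExp_comp_of_measurePreserving (hπ s) (hc n),
      eLogExp_congr_ae (hc_eqP.mono fun ω hω => hω s n)]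
  obtain ⟨δ, hδ, hdecay⟩ := exists_ae_eventually_le_exp_of_submultiplicative hθ
    (fun k => (hc k).aemeasurable) hfin hc_zero hsub hintQ hn hnegQ
  refine ⟨δ, hδ, fun t => ?_⟩
  filter_upwards [hc_eqP, (hπ t).quasiMeasurePreserving.ae hdecay] with ω hω hdecayω
  simpa only [BackwardContracting, hω] using hdecayω

lemma ae_tendsto_backwardLimit [CompleteSpace E] {δ : ℝ} {x₀ : E} (hθ : MeasurePreserving θ Q Q)
    (hg : Measurable g.uncurry) (hπ : ∀ t, MeasurePreserving (π t) P Q) (hδ : 0 < δ) {t : ℤ}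
    (hcontr : ∀ᵐ ω ∂P, BackwardContracting θ g δ (π t ω))
    (hint : Integrable (fun ω => logPlus (dist x₀ (g (π 0 ω) x₀))) P) :
    ∀ᵐ ω ∂P, ∀ x, Tendsto (fun n => backwardIterate θ g n (π t ω) x) atTop
      (𝓝 (backwardLimit θ g x₀ (π t ω))) := by
  have hdisp : Measurable fun w => logPlus (dist x₀ (g w x₀)) :=
    measurable_logPlus.comp (measurable_const.dist (hg.comp measurable_prodMk_right))
  have hgrowth := ae_eventually_iterate_le_exp hθ
    (((hπ 0).integrable_comp hdisp.aestronglyMeasurable).1 hint) (half_pos hδ)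
  filter_upwards [hcontr, (hπ t).quasiMeasurePreserving.ae hgrowth] with ω hω hgrowthω x
  exact hω.tendsto_of_tendsto hδ (tendsto_backwardLimit_of_cauchySeq (hω.cauchySeq hδ hgrowthω))

end StationaryRecursion

theorem exists_ergodic_solution_of_contracting_on_average {Ω E α : Type*} [MeasurableSpace Ω]
    {P : Measure Ω} [IsProbabilityMeasure P] [MetricSpace E] [CompleteSpace E]
    [SecondCountableTopology E] [MeasurableSpace E] [BorelSpace E] [MeasurableSpace α]
    {ξ : Ω → ℤ → α} (hξ : Measurable ξ) (hstat : Ergodic pathShift (P.map ξ))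
    {g : (ℤ → α) → E → E} (hg : Measurable g.uncurry)
    (hLip : ∀ t, ∀ᵐ ω ∂P, lipConst (g (pathTranslate t (ξ ω))) ≠ ⊤)
    (hlogc : Integrable (fun ω => logPlus (lipConst (g (pathTranslate 0 (ξ ω)))).toReal) P)
    {x₀ : E} (hlogd : Integrable (fun ω => logPlus (dist x₀ (g (pathTranslate 0 (ξ ω)) x₀))) P)
    {n : ℕ} (hn : n ≠ 0) {s : ℤ}
    (hneg : eLogExp P (fun ω =>
      lipConst (backwardIterate (pathTranslate (-1)) g n (pathTranslate s (ξ ω)))) < 0) :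
    ∃ X : ℤ → Ω → E, (∀ t, Measurable (X t)) ∧
      (∀ t, ∀ᵐ ω ∂P, ∀ x, Tendsto
        (fun n => backwardIterate (pathTranslate (-1)) g n (pathTranslate t (ξ ω)) x)
        atTop (𝓝 (X t ω))) ∧
      (∀ t, ∀ᵐ ω ∂P, X t ω = g (pathTranslate t (ξ ω)) (X (t - 1) ω)) ∧
      Ergodic pathShift (P.map fun ω t => X t ω) ∧
      ∀ Y : ℤ → Ω → E, (∀ t, Measurable (Y t)) →
        MeasurePreserving pathShift (P.map fun ω t => Y t ω) (P.map fun ω t => Y t ω) →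
        (∀ t, ∀ᵐ ω ∂P, Y t ω = g (pathTranslate t (ξ ω)) (Y (t - 1) ω)) →
        ∀ t, Y t =ᵐ[P] X t := by
  have := Measure.isProbabilityMeasure_map (μ := P) hξ.aemeasurable
  have hθ : Ergodic (pathTranslate (-1)) (P.map ξ) := ergodic_pathTranslate_neg_one hstat
  have hπ (t : ℤ) : MeasurePreserving (fun ω => pathTranslate t (ξ ω)) P (P.map ξ) :=
    (measurePreserving_pathTranslate hstat.toMeasurePreserving t).comp (hξ.measurePreserving P)
  have hshift (t : ℤ) (ω : Ω) := pathTranslate_neg_one_pathTranslate t (ξ ω)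
  obtain ⟨δ, hδ, hcontr⟩ := exists_ae_backwardContracting hθ hg hπ hshift hLip hlogc hn hneg
  have hlim (t : ℤ) := ae_tendsto_backwardLimit hθ.toMeasurePreserving hg hπ hδ (hcontr t) hlogd
  have hlim₀ (t : ℤ) := (hlim t).mono fun ω hω => hω x₀
  have hX := measurable_backwardLimit hθ.measurable hg x₀
  exact ⟨fun t ω => backwardLimit (pathTranslate (-1)) g x₀ (pathTranslate t (ξ ω)),
    fun t => hX.comp (hπ t).measurable, hlim,
    fun t => ae_eq_apply_of_ae_tendsto_backwardIterate hshift hlim₀ (hLip t),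
    ergodic_pathShift_map_factor hξ hstat hX,
    fun Y hY hYstat hYrec t =>
      ae_eq_of_stationary_of_recursion hδ hshift hY hYstat hYrec (hcontr t) (hlim₀ t)⟩

/-- The random map `f₀ = F(·, Z₋₁, ε₀)` as a function of the noise path `(Z, ε)`; the map `f_t` is
`recursionMap F` at the path translated by `t`. -/
def recursionMap {E E1 E2 : Type*} (F : E → E1 → E2 → E) (w : ℤ → E1 × E2) (x : E) : E :=
  F x (w (-1)).1 (w 0).2

lemma measurable_uncurry_recursionMap {E E1 E2 : Type*} [MeasurableSpace E] [MeasurableSpace E1]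
    [MeasurableSpace E2] {F : E → E1 → E2 → E}
    (hF : Measurable fun p : E × E1 × E2 => F p.1 p.2.1 p.2.2) :
    Measurable (recursionMap F).uncurry :=
  hF.comp (f := fun p : (ℤ → E1 × E2) × E => (p.2, (p.1 (-1)).1, (p.1 0).2)) (by fun_prop)

lemma recursionMap_pathTranslate {E E1 E2 : Type*} (F : E → E1 → E2 → E) (t : ℤ)
    (w : ℤ → E1 × E2) (x : E) :
    recursionMap F (pathTranslate t w) x = F x (w (t - 1)).1 (w t).2 := by
  rw [recursionMap, pathTranslate, pathTranslate, neg_add_eq_sub, zero_add]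

theorem stationary_ergodic_solution_of_neg_lyapunov_general
    {Ω E E1 E2 : Type*} [MeasurableSpace Ω]
    [MetricSpace E] [CompleteSpace E] [TopologicalSpace.SeparableSpace E]
    [MeasurableSpace E] [BorelSpace E] [MeasurableSpace E1] [MeasurableSpace E2]
    (P : Measure Ω) [IsProbabilityMeasure P]
    (Z : ℤ → Ω → E1) (ε : ℤ → Ω → E2) (F : E → E1 → E2 → E)
    (hZ : ∀ t, Measurable (Z t)) (hε : ∀ t, Measurable (ε t))
    (hF : Measurable fun p : E × E1 × E2 => F p.1 p.2.1 p.2.2)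
    (hstat : Ergodic pathShift (P.map (fun ω (t : ℤ) => (Z t ω, ε t ω))))
    (f : ℤ → Ω → E → E)
    (hf : ∀ t ω x, f t ω x = F x (Z (t - 1) ω) (ε t ω))
    (hLip : ∀ t : ℤ, ∀ᵐ ω ∂P, lipConst (f t ω) < ⊤)
    (x₀ : E)
    (hlogc : Integrable (fun ω => logPlus (lipConst (f 0 ω)).toReal) P)
    (hlogd : Integrable (fun ω => logPlus (dist x₀ (f 0 ω x₀))) P)
    (χ : EReal)
    (hχdef : χ = ⨅ n : {n : ℕ // 1 ≤ n}, (((n.1 : ℝ)⁻¹ : ℝ) : EReal) *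
          eLogExp P (fun ω => lipConst (iterBack f (n.1 - 1) (n.1 : ℤ) ω)))
    (hχneg : χ < 0) :
    ∃ X : ℤ → Ω → E,
      (∀ t, Measurable (X t)) ∧
      (∀ (x : E) (t : ℤ), ∀ᵐ ω ∂P,
        Tendsto (fun k : ℕ => iterBack f k t ω x) atTop (𝓝 (X t ω))) ∧
      (∀ t : ℤ, ∀ᵐ ω ∂P, X t ω = F (X (t - 1) ω) (Z (t - 1) ω) (ε t ω)) ∧
      Ergodic pathShift (P.map (fun ω (t : ℤ) => X t ω)) ∧
      (∀ Y : ℤ → Ω → E, (∀ t, Measurable (Y t)) →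
        MeasurePreserving pathShift (P.map (fun ω (t : ℤ) => Y t ω))
          (P.map (fun ω (t : ℤ) => Y t ω)) →
        (∀ t : ℤ, ∀ᵐ ω ∂P, Y t ω = F (Y (t - 1) ω) (Z (t - 1) ω) (ε t ω)) →
        ∀ t, Y t =ᵐ[P] X t) := by
  have := UniformSpace.secondCountable_of_separable E
  set ξ : Ω → ℤ → E1 × E2 := fun ω t => (Z t ω, ε t ω)
  have hξ : Measurable ξ := measurable_pi_lambda _ fun t => (hZ t).prodMk (hε t)
  have hrec (t : ℤ) (ω : Ω) (x : E) :
      recursionMap F (pathTranslate t (ξ ω)) x = F x (Z (t - 1) ω) (ε t ω) :=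
    recursionMap_pathTranslate F t _ x
  have hfg (t : ℤ) (ω : Ω) : f t ω = recursionMap F (pathTranslate t (ξ ω)) :=
    funext fun x => (hf t ω x).trans (hrec t ω x).symm
  have hiter := iterBack_eq_backwardIterate hfg fun t ω =>
    pathTranslate_neg_one_pathTranslate t (ξ ω)
  simp only [hfg] at hLip hlogc hlogd
  obtain ⟨n, hn, hneg⟩ := exists_neg_of_iInf_inv_mul_neg
    (a := fun n => eLogExp P fun ω => lipConst (iterBack f (n - 1) n ω)) (hχdef ▸ hχneg)
  simp only [hiter, Nat.sub_add_cancel hn] at hneg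
  obtain ⟨X, hX, hlim, hXrec, hergodic, hunique⟩ :=
    exists_ergodic_solution_of_contracting_on_average hξ hstat
      (measurable_uncurry_recursionMap hF) (fun t => (hLip t).mono fun ω => LT.lt.ne) hlogc hlogd
      (Nat.one_le_iff_ne_zero.1 hn) hneg
  simp only [hrec] at hXrec hunique
  refine ⟨X, hX, fun x t => (hlim t).mono fun ω hω => ?_, hXrec, hergodic, hunique⟩
  simpa only [hiter] using (tendsto_add_atTop_iff_nat 1).2 (hω x)

/-- Theorem 1.1, part 2: if the Lyapunov exponent `χ` is negative, the
backward iterations `f_{t-k}^t(x)` converge a.s. to a limit `X_t` not depending on `x`; the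
process `(X_t)` is stationary and ergodic, satisfies `X_t = F(X_{t-1}, Z_{t-1}, ε_t)`, and is
the unique stationary solution of this recursion. -/
theorem stationary_ergodic_solution_of_neg_lyapunov
    {Ω E E1 E2 : Type*} [MeasurableSpace Ω]
    [MetricSpace E] [CompleteSpace E] [TopologicalSpace.SeparableSpace E]
    [LocallyCompactSpace E] [MeasurableSpace E] [BorelSpace E]
    [MeasurableSpace E1] [MeasurableSpace E2]
    (P : Measure Ω) [IsProbabilityMeasure P]
    (Z : ℤ → Ω → E1) (ε : ℤ → Ω → E2) (F : E → E1 → E2 → E)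
    (hZ : ∀ t, Measurable (Z t)) (hε : ∀ t, Measurable (ε t))
    (hF : Measurable fun p : E × E1 × E2 => F p.1 p.2.1 p.2.2)
    -- stationarity and ergodicity of ((Z_t, ε_t))
    (hstat : Ergodic pathShift (P.map (fun ω (t : ℤ) => (Z t ω, ε t ω))))
    (f : ℤ → Ω → E → E)
    (hf : ∀ t ω x, f t ω x = F x (Z (t - 1) ω) (ε t ω))
    -- the random maps are almost surely Lipschitz
    (hLip : ∀ t : ℤ, ∀ᵐ ω ∂P, lipConst (f t ω) < ⊤)
    (x₀ : E)
    (hlogc : Integrable (fun ω => logPlus (lipConst (f 0 ω)).toReal) P)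
    (hlogd : Integrable (fun ω => logPlus (dist x₀ (f 0 ω x₀))) P)
    -- the Lyapunov exponent, assumed negative
    (χ : EReal)
    (hχdef : χ = ⨅ n : {n : ℕ // 1 ≤ n}, (((n.1 : ℝ)⁻¹ : ℝ) : EReal) *
          eLogExp P (fun ω => lipConst (iterBack f (n.1 - 1) (n.1 : ℤ) ω)))
    (hχneg : χ < 0) :
    ∃ X : ℤ → Ω → E,
      (∀ t, Measurable (X t)) ∧
      -- the backward iterations converge a.s. to X_t, for every starting point x
      (∀ (x : E) (t : ℤ), ∀ᵐ ω ∂P,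
        Tendsto (fun k : ℕ => iterBack f k t ω x) atTop (𝓝 (X t ω))) ∧
      -- X solves the recursion
      (∀ t : ℤ, ∀ᵐ ω ∂P, X t ω = F (X (t - 1) ω) (Z (t - 1) ω) (ε t ω)) ∧
      -- X is stationary and ergodic
      Ergodic pathShift (P.map (fun ω (t : ℤ) => X t ω)) ∧
      -- X is the unique stationary solution
      (∀ Y : ℤ → Ω → E, (∀ t, Measurable (Y t)) →
        MeasurePreserving pathShift (P.map (fun ω (t : ℤ) => Y t ω))
          (P.map (fun ω (t : ℤ) => Y t ω)) →
        (∀ t : ℤ, ∀ᵐ ω ∂P, Y t ω = F (Y (t - 1) ω) (Z (t - 1) ω) (ε t ω)) →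
        ∀ t, Y t =ᵐ[P] X t) := by
  exact stationary_ergodic_solution_of_neg_lyapunov_general P Z ε F hZ hε hF hstat f hf hLip x₀
    hlogc hlogd χ hχdef hχneg

end
end

section
/- Let (ζ_t)_{t∈ℤ} be a stationary and ergodic process with values in a measurable space E', let q ≥ 1 and g : {0,1}^q × E' → ℝ measurable, and suppose that P(min over y ∈ {0,1}^q and 1 ≤ t ≤ q of g(y, ζ_t) > 0) + P(max over y ∈ {0,1}^q and 1 ≤ t ≤ q of g(y, ζ_t) ≤ 0) > 0. Then there exists a unique stationary and ergodic {0,1}-valued process (Y_t)_{t∈ℤ} satisfying Y_t = 1_{g(Y_{t−1},…,Y_{t−q},ζ_t) > 0} for all t ∈ ℤ. -/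
/-!
If none of the inputs at times `m + 1, …, m + q` lets the recursion see its past, then all
solutions agree at those `q` times, and hence forever after. By ergodicity almost every input path
has such windows arbitrarily far in the past. The solution at time `t` is therefore forced, and it
is obtained by running the recursion from any initial state, starting at the last such window
before `t`. This recipe commutes with the shift, so the solution is a factor of the input and
inherits its ergodicity.
-/

open MeasureTheory Filter Topology ProbabilityTheory
open scoped ENNReal NNReal

noncomputable section

/-- `ℤ`-indexed iterates of an invertible map `T` (with inverse `T'`). -/
def iterZ {Ω : Type*} (T T' : Ω → Ω) : ℤ → Ω → Ω
  | Int.ofNat n => T^[n]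
  | Int.negSucc n => T'^[n + 1]

section Shift

variable {Ω E : Type*} {T T' : Ω → Ω}

theorem iterZ_add_one_apply (hTT' : Function.LeftInverse T' T) (t : ℤ) (ω : Ω) :
    iterZ T T' (t + 1) ω = iterZ T T' t (T ω) := by
  match t with
  | Int.ofNat n => rfl
  | Int.negSucc 0 => exact (hTT' ω).symm
  | Int.negSucc (n + 1) =>
    calc iterZ T T' (Int.negSucc (n + 1) + 1) ω = T'^[n + 1] ω := by
          rw [show Int.negSucc (n + 1) + 1 = Int.negSucc n by lia, iterZ]
      _ = T'^[n + 1] (T' (T ω)) := by rw [hTT' ω]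

variable [MeasurableSpace Ω] [MeasurableSpace E]

theorem measurable_pathShift : Measurable (pathShift : (ℤ → E) → ℤ → E) :=
  measurable_pi_lambda _ fun t => measurable_pi_apply (t + 1)

theorem measurable_iterZ (hT : Measurable T) (hT' : Measurable T') (t : ℤ) :
    Measurable (iterZ T T' t) := by
  match t with
  | Int.ofNat n => exact hT.iterate n
  | Int.negSucc n => exact hT'.iterate (n + 1)

theorem ergodic_pathShift_map_iterZ {P : Measure Ω} (hT : Ergodic T P) (hT' : Measurable T')
    (hTT' : Function.LeftInverse T' T) {ζ₀ : Ω → E} (hζ₀ : Measurable ζ₀) :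
    Ergodic pathShift (P.map fun ω (t : ℤ) => ζ₀ (iterZ T T' t ω)) := by
  have hpath : Measurable fun ω (t : ℤ) => ζ₀ (iterZ T T' t ω) :=
    measurable_pi_lambda _ fun t => hζ₀.comp (measurable_iterZ hT.measurable hT' t)
  exact (hpath.measurePreserving P).ergodic_of_ergodic_semiconj hT measurable_pathShift
    fun ω => funext fun t => congrArg ζ₀ (iterZ_add_one_apply hTT' t ω).symm

end Shift

section Recurrence

variable {α : Type*} [MeasurableSpace α] {μ : Measure α} {T : α → α} {A : ℤ → Set α}

theorem measure_eq_measure_zero_of_preimage_eq (hT : MeasurePreserving T μ μ)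
    (hA : ∀ m, MeasurableSet (A m)) (hTA : ∀ m, T ⁻¹' A m = A (m + 1)) (m : ℤ) :
    μ (A m) = μ (A 0) := by
  have hsucc (k : ℤ) : μ (A (k + 1)) = μ (A k) := by
    rw [← hTA, hT.measure_preimage (hA k).nullMeasurableSet]
  induction m using Int.induction_on with
  | zero => rfl
  | succ k ih => rw [hsucc, ih]
  | pred k ih => rw [← hsucc, sub_add_cancel, ih]

theorem ae_frequently_atBot_mem_of_ergodic [IsFiniteMeasure μ] (hT : Ergodic T μ)
    (hA : ∀ m, MeasurableSet (A m)) (hTA : ∀ m, T ⁻¹' A m = A (m + 1)) (hpos : μ (A 0) ≠ 0) :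
    ∀ᵐ x ∂μ, ∃ᶠ m in atBot, x ∈ A m := by
  have hbefore (t : ℤ) : ∀ᵐ x ∂μ, ∃ m < t, x ∈ A m := by
    set B : Set α := ⋃ m < t, A m with hB
    have hBmeas : MeasurableSet B := .biUnion (Set.to_countable _) fun m _ => hA m
    -- `T` maps `B` into itself, so by finiteness of `μ` the set `B` is invariant up to null sets.
    have hBT : B ⊆ T ⁻¹' B := by
      simp only [hB, Set.preimage_iUnion, hTA]
      refine Set.iUnion₂_subset fun m hm => ?_
      exact Set.subset_iUnion₂_of_subset (m - 1) (by lia) (by rw [sub_add_cancel])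
    have hBpos : μ B ≠ 0 := fun hB0 => hpos <| by
      rw [← measure_eq_measure_zero_of_preimage_eq hT.toMeasurePreserving hA hTA (t - 1)]
      exact measure_mono_null (Set.subset_biUnion_of_mem (u := A) (sub_one_lt t)) hB0
    rcases hT.ae_empty_or_univ_of_ae_le_preimage hBmeas.nullMeasurableSet hBT.eventuallyLE
      with hnull | hfull
    · exact absurd (ae_eq_empty.mp hnull) hBpos
    · filter_upwards [eventuallyEq_univ.mp hfull] with x hx
      simpa only [hB, Set.mem_iUnion, exists_prop] using hx
  filter_upwards [ae_all_iff.mpr hbefore] with x hx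
  exact frequently_atBot'.mpr hx

end Recurrence

section Recursion

variable {S E : Type*} {q : ℕ}

/-- The path `x` satisfies `x_t = f(x_{t-1}, …, x_{t-q}; z_t)` at the time `t`; coordinate `i` of
the first argument of `f` is the lag `i + 1`. -/
def SolvesAt (f : (Fin q → S) → E → S) (z : ℤ → E) (x : ℤ → S) (t : ℤ) : Prop :=
  x t = f (fun i : Fin q => x (t - 1 - (i : ℤ))) (z t)

/-- The solution of `x_t = f(x_{t-1}, …, x_{t-q}; z_t)`, `t > s`, that equals `a` up to time `s`. -/
def solutionFrom (f : (Fin q → S) → E → S) (a : S) (z : ℤ → E) (s t : ℤ) : S :=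
  if t ≤ s then a else f (fun i : Fin q => solutionFrom f a z s (t - 1 - (i : ℤ))) (z t)
termination_by (t - s).toNat
decreasing_by lia

/-- None of the inputs at times `m + 1, …, m + q` lets `f` depend on its history, so that the
recursion forgets everything before this window. -/
def IsResetWindow (f : (Fin q → S) → E → S) (z : ℤ → E) (m : ℤ) : Prop :=
  ∀ (i : Fin q) (y y' : Fin q → S), f y (z (m + ((i : ℤ) + 1))) = f y' (z (m + ((i : ℤ) + 1)))

/-- The `n` for which the last reset window before time `t` starts at `t - 1 - n`; it has the junk
value `0` if there is no such window. -/
def resetLag (f : (Fin q → S) → E → S) (z : ℤ → E) (t : ℤ) : ℕ :=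
  sInf {n : ℕ | IsResetWindow f z (t - 1 - (n : ℤ))}

/-- The path whose value at `t` is computed by starting the recursion from `a` at the last reset
window before `t`. Choosing the window by its lag makes this path a measurable and
shift-equivariant functional of the input `z`. -/
def resetSolution (f : (Fin q → S) → E → S) (a : S) (z : ℤ → E) (t : ℤ) : S :=
  solutionFrom f a z (t - 1 - (resetLag f z t : ℤ)) t

variable {f : (Fin q → S) → E → S} {a : S} {z : ℤ → E} {x x' : ℤ → S} {m s t : ℤ}

theorem solutionFrom_of_le (h : t ≤ s) : solutionFrom f a z s t = a := by
  rw [solutionFrom, if_pos h]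

theorem solvesAt_solutionFrom (h : s < t) : SolvesAt f z (solutionFrom f a z s) t := by
  rw [SolvesAt, solutionFrom, if_neg h.not_ge]

theorem solutionFrom_pathShift (f : (Fin q → S) → E → S) (a : S) (z : ℤ → E) (s t : ℤ) :
    solutionFrom f a (pathShift z) s t = solutionFrom f a z (s + 1) (t + 1) := by
  induction t using solutionFrom.induct (q := q) s with
  | case1 t h => rw [solutionFrom_of_le h, solutionFrom_of_le (by lia)]
  | case2 t h ih =>
    rw [solvesAt_solutionFrom (not_le.mp h), solvesAt_solutionFrom (by lia : s + 1 < t + 1)]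
    simp only [ih, pathShift]
    congr! 3
    ring

theorem isResetWindow_pathShift :
    IsResetWindow f (pathShift z) m ↔ IsResetWindow f z (m + 1) := by
  simp only [IsResetWindow, pathShift, add_right_comm m]

theorem resetLag_pathShift (f : (Fin q → S) → E → S) (z : ℤ → E) (t : ℤ) :
    resetLag f (pathShift z) t = resetLag f z (t + 1) := by
  simp only [resetLag, isResetWindow_pathShift, sub_add_eq_add_sub]

theorem resetSolution_pathShift (f : (Fin q → S) → E → S) (a : S) :
    Function.Semiconj (resetSolution f a) pathShift pathShift := fun z => funext fun t => by
  simp only [resetSolution, pathShift, solutionFrom_pathShift, resetLag_pathShift,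
    sub_add_eq_add_sub]

theorem IsResetWindow.eq_of_solvesAt (hm : IsResetWindow f z m) (hx : ∀ t > m, SolvesAt f z x t)
    (hx' : ∀ t > m, SolvesAt f z x' t) (ht : m < t) : x t = x' t := by
  induction t using solutionFrom.induct (q := q) m with
  | case1 t h => exact absurd ht h.not_gt
  | case2 t _ ih =>
    rw [hx t ht, hx' t ht]
    by_cases hwindow : t ≤ m + q
    · obtain ⟨i, rfl⟩ : ∃ i : Fin q, t = m + ((i : ℤ) + 1) :=
        ⟨⟨(t - m - 1).toNat, by lia⟩, by simp only; lia⟩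
      exact hm i _ _
    · congr 1
      exact funext fun i => ih i (by have := i.isLt; lia)

theorem IsResetWindow.resetLag_spec (hm : IsResetWindow f z m) (ht : m < t) :
    IsResetWindow f z (t - 1 - (resetLag f z t : ℤ)) ∧ m ≤ t - 1 - (resetLag f z t : ℤ) := by
  have hmem : (t - 1 - m).toNat ∈ {n : ℕ | IsResetWindow f z (t - 1 - (n : ℤ))} := by
    rwa [Set.mem_ofPred_eq, show t - 1 - ((t - 1 - m).toNat : ℤ) = m by lia]
  have hle : resetLag f z t ≤ (t - 1 - m).toNat := Nat.sInf_le hmem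
  exact ⟨Nat.sInf_mem ⟨_, hmem⟩, by lia⟩

theorem IsResetWindow.resetSolution_eq (hm : IsResetWindow f z m) (hx : ∀ t > m, SolvesAt f z x t)
    (ht : m < t) : resetSolution f a z t = x t := by
  obtain ⟨hlast, hle⟩ := hm.resetLag_spec ht
  exact hlast.eq_of_solvesAt (x := solutionFrom f a z _) (fun u hu => solvesAt_solutionFrom hu)
    (fun u hu => hx u (hle.trans_lt hu)) (by lia)

theorem solvesAt_resetSolution (hz : ∃ᶠ m in atBot, IsResetWindow f z m) (a : S) (t : ℤ) :
    SolvesAt f z (resetSolution f a z) t := by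
  obtain ⟨m, hmt, hm⟩ := frequently_atBot'.mp hz (t - q)
  have heq {u : ℤ} (hu : m < u) : resetSolution f a z u = solutionFrom f a z m u :=
    hm.resetSolution_eq (fun t ht => solvesAt_solutionFrom ht) hu
  rw [SolvesAt, heq (by lia), solvesAt_solutionFrom (by lia)]
  congr 1
  exact funext fun i => (heq (by have := i.isLt; lia)).symm

theorem eq_resetSolution (hz : ∃ᶠ m in atBot, IsResetWindow f z m) (a : S)
    (hx : ∀ t, SolvesAt f z x t) (t : ℤ) : x t = resetSolution f a z t := by
  obtain ⟨m, hmt, hm⟩ := frequently_atBot'.mp hz t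
  exact (hm.resetSolution_eq (fun t _ => hx t) hmt).symm

end Recursion

section Measurability

variable {α S E : Type*} [MeasurableSpace α] [MeasurableSpace E] {q : ℕ} {f : (Fin q → S) → E → S}

theorem measurable_decide {p : α → Prop} [DecidablePred p] (hp : MeasurableSet {x | p x}) :
    Measurable fun x => decide (p x) :=
  measurable_to_bool <| by simpa only [Set.preimage, Set.mem_singleton_iff, decide_eq_true_iff]

theorem measurable_nat_sInf {p : α → ℕ → Prop} (hp : ∀ n, MeasurableSet {x | p x n}) :
    Measurable fun x => sInf {n | p x n} := by
  refine measurable_of_Iic fun n => ?_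
  have heq : (fun x => sInf {n | p x n}) ⁻¹' Set.Iic n
      = (⋃ k ≤ n, {x | p x k}) ∪ ⋂ k, {x | p x k}ᶜ := by
    ext x
    simp only [Set.mem_preimage, Set.mem_Iic, Set.mem_union, Set.mem_iUnion, Set.mem_iInter,
      Set.mem_compl_iff, Set.mem_ofPred_eq, exists_prop]
    constructor
    · intro hle
      by_cases hne : ∃ k, p x k
      · exact Or.inl ⟨_, hle, Nat.sInf_mem hne⟩
      · exact Or.inr (not_exists.mp hne)
    · rintro (⟨k, hk, hpk⟩ | hnone)
      · exact (Nat.sInf_le hpk).trans hk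
      · simp only [hnone, Set.ofPred_false, Nat.sInf_empty, zero_le]
  rw [heq]
  exact (MeasurableSet.biUnion (Set.to_countable _) fun k _ => hp k).union
    (MeasurableSet.iInter fun k => (hp k).compl)

theorem measurableSet_forall_apply_eq {ι β : Type*} [Countable ι] [MeasurableSpace β]
    [MeasurableEq β] {F : ι → α → β} (hF : ∀ i, Measurable (F i)) :
    MeasurableSet {x | ∀ i j, F i x = F j x} := by
  simp only [Set.ofPred_forall]
  exact .iInter fun i => .iInter fun j => measurableSet_eq_fun (hF i) (hF j)

theorem measurableSet_isResetWindow (hreset : MeasurableSet {e | ∀ y y', f y e = f y' e}) (m : ℤ) :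
    MeasurableSet {z | IsResetWindow f z m} := by
  simp only [IsResetWindow, Set.ofPred_forall (ι := Fin q)]
  exact .iInter fun i => hreset.preimage (measurable_pi_apply (m + ((i : ℤ) + 1)))

variable [MeasurableSpace S]

theorem measurable_solutionFrom (hf : Measurable (Function.uncurry f)) (a : S) (s t : ℤ) :
    Measurable fun z => solutionFrom f a z s t := by
  induction t using solutionFrom.induct (q := q) s with
  | case1 t h => simpa only [solutionFrom_of_le h] using measurable_const
  | case2 t h ih =>
    have hstep : (fun z => solutionFrom f a z s t)
        = fun z => f (fun i : Fin q => solutionFrom f a z s (t - 1 - (i : ℤ))) (z t) :=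
      funext fun z => solvesAt_solutionFrom (not_le.mp h)
    rw [hstep]
    exact hf.comp ((measurable_pi_lambda _ ih).prodMk (measurable_pi_apply t))

theorem measurable_resetSolution (hf : Measurable (Function.uncurry f))
    (hreset : MeasurableSet {e | ∀ y y', f y e = f y' e}) (a : S) :
    Measurable (resetSolution f a) := by
  refine measurable_pi_lambda _ fun t => ?_
  have hlag : Measurable fun z => resetLag f z t :=
    measurable_nat_sInf fun n => measurableSet_isResetWindow hreset _
  have hsol : Measurable fun p : ℕ × (ℤ → E) => solutionFrom f a p.2 (t - 1 - (p.1 : ℤ)) t :=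
    measurable_from_prod_countable_right fun n => measurable_solutionFrom hf a (t - 1 - (n : ℤ)) t
  exact hsol.comp (hlag.prodMk measurable_id)

end Measurability

theorem measure_forall_decide_pos_eq_ne_zero {Ω ι κ R : Type*} [MeasurableSpace Ω]
    [Preorder R] [Zero R] [DecidableLT R] {P : Measure Ω} {u : κ → ι → Ω → R}
    (h : 0 < P {ω | ∀ y i, 0 < u y i ω} + P {ω | ∀ y i, u y i ω ≤ 0}) :
    P {ω | ∀ i y y', decide (0 < u y i ω) = decide (0 < u y' i ω)} ≠ 0 := by
  intro hnull
  refine h.ne' <| add_eq_zero.mpr ⟨measure_mono_null ?pos hnull, measure_mono_null ?nonpos hnull⟩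
  case pos => exact fun ω hω i y y' => decide_eq_decide.mpr (iff_of_true (hω y i) (hω y' i))
  case nonpos =>
    exact fun ω hω i y y' => decide_eq_decide.mpr (iff_of_false (hω y i).not_gt (hω y' i).not_gt)

theorem binary_choice_solution_general {Ω S E : Type*} {q : ℕ} [MeasurableSpace Ω]
    [MeasurableSpace S] [Nonempty S] [MeasurableSpace E] (P : Measure Ω) [IsFiniteMeasure P]
    {ζ : ℤ → Ω → E} (hζ : ∀ t, Measurable (ζ t))
    (hergodic : Ergodic pathShift (P.map fun ω (t : ℤ) => ζ t ω))
    {f : (Fin q → S) → E → S} (hf : Measurable (Function.uncurry f))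
    (hreset : MeasurableSet {e | ∀ y y', f y e = f y' e})
    (hpos : P {ω | ∀ (i : Fin q) (y y' : Fin q → S),
      f y (ζ ((i : ℤ) + 1) ω) = f y' (ζ ((i : ℤ) + 1) ω)} ≠ 0) :
    ∃ Y : ℤ → Ω → S,
      (∀ t, Measurable (Y t)) ∧
      (∀ t : ℤ, ∀ᵐ ω ∂P, Y t ω = f (fun i : Fin q => Y (t - 1 - (i : ℤ)) ω) (ζ t ω)) ∧
      Ergodic pathShift (P.map (fun ω (t : ℤ) => Y t ω)) ∧
      (∀ Y' : ℤ → Ω → S,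
        (∀ t : ℤ, ∀ᵐ ω ∂P, Y' t ω = f (fun i : Fin q => Y' (t - 1 - (i : ℤ)) ω) (ζ t ω)) →
        ∀ t, Y' t =ᵐ[P] Y t) := by
  obtain ⟨a⟩ := ‹Nonempty S›
  set Z : Ω → ℤ → E := fun ω t => ζ t ω
  have hZ : Measurable Z := measurable_pi_lambda _ hζ
  have hsol : Measurable (resetSolution f a) := measurable_resetSolution hf hreset a
  have hwindow : ∀ᵐ ω ∂P, ∃ᶠ m in atBot, IsResetWindow f (Z ω) m := by
    refine ae_of_ae_map hZ.aemeasurable <| ae_frequently_atBot_mem_of_ergodic hergodic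
      (measurableSet_isResetWindow hreset) (fun m => Set.ext fun z => isResetWindow_pathShift) ?_
    rw [Measure.map_apply hZ (measurableSet_isResetWindow hreset 0)]
    simpa only [Set.preimage_ofPred_eq, IsResetWindow, zero_add] using hpos
  refine ⟨fun t ω => resetSolution f a (Z ω) t,
    measurable_pi_iff.mp (hsol.comp hZ),
    fun t => hwindow.mono fun ω hω => solvesAt_resetSolution hω a t, ?_, fun Y' hY' t => ?_⟩
  · have hmap := (hsol.measurePreserving (P.map Z)).ergodic_of_ergodic_semiconj hergodic
      measurable_pathShift (resetSolution_pathShift f a)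
    rwa [Measure.map_map hsol hZ] at hmap
  · filter_upwards [hwindow, ae_all_iff.mpr hY'] with ω hω hsolves
    exact eq_resetSolution hω a hsolves t

/-- Proposition 4.5, part 1: for the dynamic binary choice model
`Y_t = 1_{g(Y_{t-1},…,Y_{t-q},ζ_t) > 0}` with stationary ergodic `(ζ_t)`, if
`P(min_{y,1≤t≤q} g(y,ζ_t) > 0) + P(max_{y,1≤t≤q} g(y,ζ_t) ≤ 0) > 0` then there is a unique
stationary — and ergodic — `{0,1}`-valued solution. -/
theorem binary_choice_solution
    {Ω E' : Type*} {q : ℕ} [m0 : MeasurableSpace Ω] [MeasurableSpace E']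
    (P : Measure Ω) [IsProbabilityMeasure P]
    (hq : 0 < q)
    -- (ζ_t) stationary and ergodic, encoded via an invertible ergodic shift T
    (T T' : Ω → Ω) (hT : Ergodic T P) (hT' : Measurable T')
    (hTT' : ∀ ω, T' (T ω) = ω) (hT'T : ∀ ω, T (T' ω) = ω)
    (ζ0 : Ω → E') (hζ0 : Measurable ζ0)
    (ζ : ℤ → Ω → E') (hζ : ∀ t ω, ζ t ω = ζ0 (iterZ T T' t ω))
    (g : (Fin q → Bool) → E' → ℝ)
    (hg : Measurable fun z : (Fin q → Bool) × E' => g z.1 z.2)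
    -- the coalescence condition
    (hcoal : 0 <
      P {ω | ∀ (y : Fin q → Bool) (t : Fin q), 0 < g y (ζ ((t : ℤ) + 1) ω)}
      + P {ω | ∀ (y : Fin q → Bool) (t : Fin q), g y (ζ ((t : ℤ) + 1) ω) ≤ 0}) :
    ∃ Y : ℤ → Ω → Bool,
      (∀ t, Measurable (Y t)) ∧
      -- Y solves the binary autoregression
      (∀ t : ℤ, ∀ᵐ ω ∂P,
        (Y t ω = true ↔ 0 < g (fun i : Fin q => Y (t - 1 - (i : ℤ)) ω) (ζ t ω))) ∧
      -- Y is stationary and ergodic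
      Ergodic pathShift (P.map (fun ω (t : ℤ) => Y t ω)) ∧
      -- uniqueness among stationary solutions
      (∀ Y' : ℤ → Ω → Bool, (∀ t, Measurable (Y' t)) →
        MeasurePreserving pathShift
          (P.map (fun ω (t : ℤ) => Y' t ω)) (P.map (fun ω (t : ℤ) => Y' t ω)) →
        (∀ t : ℤ, ∀ᵐ ω ∂P,
          (Y' t ω = true ↔ 0 < g (fun i : Fin q => Y' (t - 1 - (i : ℤ)) ω) (ζ t ω))) →
        ∀ t, Y' t =ᵐ[P] Y t) := by
  obtain rfl : ζ = fun t ω => ζ0 (iterZ T T' t ω) := funext₂ hζ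
  let f : (Fin q → Bool) → E' → Bool := fun y e => decide (0 < g y e)
  have hf : Measurable (Function.uncurry f) :=
    measurable_decide (measurableSet_lt measurable_const hg)
  have hreset : MeasurableSet {e | ∀ y y', f y e = f y' e} :=
    measurableSet_forall_apply_eq fun y => hf.comp measurable_prodMk_left
  obtain ⟨Y, hYmeas, hYsolves, hYergodic, hYunique⟩ := binary_choice_solution_general P
    (fun t => hζ0.comp (measurable_iterZ hT.measurable hT' t))
    (ergodic_pathShift_map_iterZ hT hT' hTT' hζ0) hf hreset
    (measure_forall_decide_pos_eq_ne_zero hcoal)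
  exact ⟨Y, hYmeas, fun t => (hYsolves t).mono fun ω hω => hω ▸ decide_eq_true_iff,
    hYergodic, fun Y' _ _ hY' => hYunique Y' fun t => (hY' t).mono fun ω hω =>
      Bool.eq_iff_iff.mpr (hω.trans decide_eq_true_iff.symm)⟩

end
end
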